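/- arXiv:1205.0188 — 9 statements merged into one kernel-verified Lean document; each statement's English description precedes it below -/
import Mathlib

section
/- Let h₀ = √((8−√19)/72). Let u₁, u₂, u₃ be pairwise linearly independent unit vectors in the Euclidean plane ℝ², and let d₁, d₂, d₃ be real numbers with d₁ ≥ 1/4, d₂ ≥ h₀ and d₃ ≥ 1/4. Then the centrally symmetric convex hexagon H = {p ∈ ℝ² : |⟨p,u₁⟩| ≤ d₁ and |⟨p,u₂⟩| ≤ d₂ and |⟨p,u₃⟩| ≤ d₃} has two-dimensional Lebesgue measure at least h₀·√(1 − 4h₀²). -/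
open Real MeasureTheory RealInnerProductSpace

/-- The parameter `h₀ = √((8−√19)/72)` of the extremal nonpositively curved
Dyck's surface. -/
noncomputable def h₀ : ℝ := Real.sqrt ((8 - Real.sqrt 19) / 72)

/-!
A slab at distance `R cos α` from the center misses a pair of caps of the disc of radius `R`, of
total area `R² (2α - sin 2α)` whatever its direction. Subtracting the caps of finitely many slabs
with `∑ α = π / 2` from the disc leaves at least `R² ∑ sin 2α`, the area of the inscribed polygon
whose caps do not overlap. For the hexagon at distances `r, h, r`, put `sin θ = h / (2r)`: the
angles `θ, π / 2 - 2θ, θ` and the radius `R = r / cos θ` give exactly these distances, and area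
`4 r² sin 2θ = 2h √(4r² - h²)`.
-/

section DiscStrip

variable {R α : ℝ}

theorem integral_two_mul_sqrt_sq_sub_sq (hR : 0 ≤ R) (hα₀ : 0 ≤ α) (hα : α ≤ π) :
    ∫ x in -(R * cos α)..R * cos α, 2 * √(R ^ 2 - x ^ 2) =
      R ^ 2 * (π - 2 * α + sin (2 * α)) := by
  have hderiv : ∀ t ∈ Set.uIcc (π - α) α,
      HasDerivAt (fun t ↦ R * cos t) (R * -sin t) t := fun t _ ↦ (hasDerivAt_cos t).const_mul R
  have hsubst := intervalIntegral.integral_comp_mul_deriv (g := fun x ↦ 2 * √(R ^ 2 - x ^ 2))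
    hderiv (by fun_prop) (by fun_prop)
  rw [cos_pi_sub, mul_neg] at hsubst
  have hintegrand : ∀ t ∈ Set.uIcc (π - α) α,
      ((fun x ↦ 2 * √(R ^ 2 - x ^ 2)) ∘ fun t ↦ R * cos t) t * (R * -sin t) =
        -2 * R ^ 2 * sin t ^ 2 := by
    intro t ht
    have htπ : t ∈ Set.Icc 0 π := Set.uIcc_subset_Icc ⟨by linarith, by linarith⟩ ⟨hα₀, hα⟩ ht
    have hsqrt : √(R ^ 2 - (R * cos t) ^ 2) = R * sin t := by
      rw [← sqrt_sq (mul_nonneg hR (sin_nonneg_of_mem_Icc htπ))]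
      congr 1
      linear_combination -R ^ 2 * sin_sq_add_cos_sq t
    simp only [Function.comp_apply, hsqrt]
    ring
  rw [← hsubst, intervalIntegral.integral_congr hintegrand, intervalIntegral.integral_const_mul,
    integral_sin_sq, sin_pi_sub, cos_pi_sub, sin_two_mul]
  ring

theorem volume_regionBetween_neg_sqrt_sqrt (hR : 0 ≤ R) (hα₀ : 0 ≤ α) (hα : α ≤ π / 2) :
    volume (regionBetween (fun x ↦ -√(R ^ 2 - x ^ 2)) (fun x ↦ √(R ^ 2 - x ^ 2))
      (Set.Icc (-(R * cos α)) (R * cos α))) =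
      ENNReal.ofReal (R ^ 2 * (π - 2 * α + sin (2 * α))) := by
  have hcos : 0 ≤ R * cos α :=
    mul_nonneg hR (cos_nonneg_of_neg_pi_div_two_le_of_le (by linarith [pi_pos]) hα)
  rw [Measure.volume_eq_prod, volume_regionBetween_eq_integral
    (Continuous.integrableOn_Icc (by fun_prop)) (Continuous.integrableOn_Icc (by fun_prop))
    measurableSet_Icc (fun x _ ↦ neg_le_self (sqrt_nonneg _)),
    integral_Icc_eq_integral_Ioc, ← intervalIntegral.integral_of_le (neg_le_self hcos),
    ← integral_two_mul_sqrt_sq_sub_sq hR hα₀ (by linarith [pi_pos])]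
  simp only [Pi.sub_apply, sub_neg_eq_add, two_mul]

end DiscStrip

theorem measureReal_sub_sum_measureReal_sdiff_le {X ι : Type*} [MeasurableSpace X] [Fintype ι]
    {μ : Measure X} {B : Set X} (hB : μ B ≠ ⊤) (S : ι → Set X) :
    μ.real B - ∑ i, μ.real (B \ S i) ≤ μ.real (B ∩ ⋂ i, S i) := by
  have hcover : B ⊆ (B ∩ ⋂ i, S i) ∪ ⋃ i, B \ S i := by
    rw [← Set.sdiff_iInter, Set.inter_union_sdiff]
  have hfinite : μ ((B ∩ ⋂ i, S i) ∪ ⋃ i, B \ S i) ≠ ⊤ :=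
    measure_ne_top_of_subset
      (Set.union_subset Set.inter_subset_left (Set.iUnion_subset fun _ ↦ Set.sdiff_subset)) hB
  rw [sub_le_iff_le_add]
  calc μ.real B ≤ μ.real ((B ∩ ⋂ i, S i) ∪ ⋃ i, B \ S i) := measureReal_mono hcover hfinite
    _ ≤ μ.real (B ∩ ⋂ i, S i) + μ.real (⋃ i, B \ S i) := measureReal_union_le _ _
    _ ≤ μ.real (B ∩ ⋂ i, S i) + ∑ i, μ.real (B \ S i) := by
      gcongr
      exact measureReal_iUnion_fintype_le _

section Slab

variable {E : Type*} [NormedAddCommGroup E] [InnerProductSpace ℝ E]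

/-- The closed slab centered at the origin with normal `u`; when `u` is a unit vector, `d` is the
distance from the origin to each of its two sides. -/
def slab (u : E) (d : ℝ) : Set E := {p | |⟪p, u⟫| ≤ d}

theorem slab_mono (u : E) {d d' : ℝ} (h : d ≤ d') : slab u d ⊆ slab u d' :=
  fun _ hp ↦ le_trans hp h

theorem isClosed_slab (u : E) (d : ℝ) : IsClosed (slab u d) :=
  isClosed_le (by fun_prop) continuous_const

variable [FiniteDimensional ℝ E]

theorem exists_orthonormalBasis_apply_eq {ι : Type*} [Fintype ι]
    (hE : Module.finrank ℝ E = Fintype.card ι) {u : E} (hu : ‖u‖ = 1) (i : ι) :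
    ∃ b : OrthonormalBasis ι ℝ E, b i = u := by
  have hortho : Orthonormal ℝ (({i} : Set ι).domRestrict fun _ ↦ u) :=
    ⟨fun _ ↦ hu, fun j k hjk ↦ absurd (Subsingleton.elim j k) hjk⟩
  obtain ⟨b, hb⟩ := hortho.exists_orthonormalBasis_extension_of_card_eq hE
  exact ⟨b, hb i rfl⟩

variable [MeasurableSpace E] [BorelSpace E]

theorem exists_measurePreserving_prod_fst_eq_inner (hE : Module.finrank ℝ E = 2) {u : E}
    (hu : ‖u‖ = 1) :
    ∃ f : E → ℝ × ℝ, MeasurePreserving f ∧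
      ∀ p, (f p).1 = ⟪p, u⟫ ∧ ‖p‖ ^ 2 = (f p).1 ^ 2 + (f p).2 ^ 2 := by
  obtain ⟨b, rfl⟩ := exists_orthonormalBasis_apply_eq (ι := Fin 2) (by simpa using hE) hu 0
  refine ⟨_, (volume_preserving_finTwoArrow ℝ).comp
    ((EuclideanSpace.volume_preserving_symm_measurableEquiv_toLp (Fin 2)).comp
      b.measurePreserving_repr), fun p ↦ ⟨?_, ?_⟩⟩
  · exact (b.repr_apply_apply p 0).trans (real_inner_comm _ _)
  · rw [← b.repr.norm_map p, EuclideanSpace.real_norm_sq_eq, Fin.sum_univ_two]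
    rfl

theorem volume_ball_inter_slab (hE : Module.finrank ℝ E = 2) {u : E} (hu : ‖u‖ = 1) {R α : ℝ}
    (hR : 0 ≤ R) (hα₀ : 0 ≤ α) (hα : α ≤ π / 2) :
    volume (Metric.ball 0 R ∩ slab u (R * cos α)) =
      ENNReal.ofReal (R ^ 2 * (π - 2 * α + sin (2 * α))) := by
  obtain ⟨f, hf, hcoord⟩ := exists_measurePreserving_prod_fst_eq_inner hE hu
  rw [← volume_regionBetween_neg_sqrt_sqrt hR hα₀ hα, ← hf.measure_preimage
    (measurableSet_regionBetween (by fun_prop) (by fun_prop)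
      measurableSet_Icc).nullMeasurableSet]
  congr 1
  ext p
  have hball : p ∈ Metric.ball 0 R ↔ (f p).2 ^ 2 < R ^ 2 - (f p).1 ^ 2 := by
    rw [mem_ball_zero_iff, ← sq_lt_sq₀ (norm_nonneg p) hR, (hcoord p).2, lt_sub_iff_add_lt']
  have hslab : p ∈ slab u (R * cos α) ↔ (f p).1 ∈ Set.Icc (-(R * cos α)) (R * cos α) := by
    rw [slab, Set.mem_ofPred_eq, ← (hcoord p).1, abs_le, Set.mem_Icc]
  rw [Set.inter_comm, Set.mem_inter_iff, hslab, hball, ← sq_abs, ← lt_sqrt (abs_nonneg _), abs_lt]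
  rfl

theorem measureReal_ball_of_finrank_eq_two (hE : Module.finrank ℝ E = 2) (x : E) {R : ℝ}
    (hR : 0 ≤ R) : volume.real (Metric.ball x R) = R ^ 2 * π := by
  have : Nontrivial E := Module.nontrivial_of_finrank_pos (R := ℝ) (by lia)
  rw [measureReal_def, InnerProductSpace.volume_ball_of_dim_even (k := 1) (by lia), hE]
  simp [hR, pi_pos.le]

theorem measureReal_ball_sdiff_slab (hE : Module.finrank ℝ E = 2) {u : E} (hu : ‖u‖ = 1)
    {R α : ℝ} (hR : 0 ≤ R) (hα₀ : 0 ≤ α) (hα : α ≤ π / 2) :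
    volume.real (Metric.ball 0 R \ slab u (R * cos α)) = R ^ 2 * (2 * α - sin (2 * α)) := by
  have hsin : 0 ≤ sin (2 * α) := sin_nonneg_of_nonneg_of_le_pi (by linarith) (by linarith)
  have hsplit := measureReal_sdiff_add_inter (μ := volume) (s := Metric.ball (0 : E) R)
    (isClosed_slab u (R * cos α)).measurableSet measure_ball_lt_top.ne
  rw [measureReal_ball_of_finrank_eq_two hE 0 hR, measureReal_def _ (_ ∩ _),
    volume_ball_inter_slab hE hu hR hα₀ hα,
    ENNReal.toReal_ofReal (mul_nonneg (sq_nonneg R) (by linarith))] at hsplit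
  linarith

theorem ofReal_sum_sin_two_mul_le_volume_iInter_slab {ι : Type*} [Fintype ι]
    (hE : Module.finrank ℝ E = 2) {u : ι → E} (hu : ∀ i, ‖u i‖ = 1) {R : ℝ} (hR : 0 ≤ R)
    {α : ι → ℝ} (hα : ∀ i, 0 ≤ α i) (hsum : ∑ i, α i = π / 2) :
    ENNReal.ofReal (R ^ 2 * ∑ i, sin (2 * α i)) ≤ volume (⋂ i, slab (u i) (R * cos (α i))) := by
  have hle : ∀ i, α i ≤ π / 2 := fun i ↦
    hsum ▸ Finset.single_le_sum (fun j _ ↦ hα j) (Finset.mem_univ i)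
  set B : Set E := Metric.ball 0 R
  have hB : volume B ≠ ⊤ := measure_ball_lt_top.ne
  calc ENNReal.ofReal (R ^ 2 * ∑ i, sin (2 * α i))
      = ENNReal.ofReal (volume.real B - ∑ i, volume.real (B \ slab (u i) (R * cos (α i)))) := by
        simp only [B, measureReal_ball_of_finrank_eq_two hE 0 hR,
          measureReal_ball_sdiff_slab hE (hu _) hR (hα _) (hle _), ← Finset.mul_sum,
          Finset.sum_sub_distrib, hsum]
        congr 1
        ring
    _ ≤ ENNReal.ofReal (volume.real (B ∩ ⋂ i, slab (u i) (R * cos (α i)))) :=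
        ENNReal.ofReal_le_ofReal (measureReal_sub_sum_measureReal_sdiff_le hB _)
    _ = volume (B ∩ ⋂ i, slab (u i) (R * cos (α i))) :=
        ofReal_measureReal (measure_ne_top_of_subset Set.inter_subset_left hB)
    _ ≤ volume (⋂ i, slab (u i) (R * cos (α i))) := measure_mono Set.inter_subset_right

theorem ofReal_sin_two_mul_le_volume_inter_slab (hE : Module.finrank ℝ E = 2) {u₁ u₂ u₃ : E}
    (hu₁ : ‖u₁‖ = 1) (hu₂ : ‖u₂‖ = 1) (hu₃ : ‖u₃‖ = 1) {r θ : ℝ} (hr : 0 ≤ r) (hθ₀ : 0 ≤ θ)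
    (hθ : θ ≤ π / 4) :
    ENNReal.ofReal (4 * r ^ 2 * sin (2 * θ)) ≤
      volume (slab u₁ r ∩ (slab u₂ (2 * r * sin θ) ∩ slab u₃ r)) := by
  have hcos : 0 < cos θ := cos_pos_of_mem_Ioo ⟨by linarith [pi_pos], by linarith [pi_pos]⟩
  have hpolygon := ofReal_sum_sin_two_mul_le_volume_iInter_slab hE (u := ![u₁, u₂, u₃])
    (by simp [Fin.forall_fin_succ, hu₁, hu₂, hu₃]) (div_nonneg hr hcos.le)
    (α := ![θ, π / 2 - 2 * θ, θ])
    (by simp only [Fin.forall_fin_succ]; simp [hθ₀]; linarith)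
    (by simp only [Fin.sum_univ_three, Matrix.cons_val]; ring)
  have harea : (r / cos θ) ^ 2 * ∑ i, sin (2 * ![θ, π / 2 - 2 * θ, θ] i) =
      4 * r ^ 2 * sin (2 * θ) := by
    have hdouble : sin (2 * (π / 2 - 2 * θ)) = 2 * sin (2 * θ) * (2 * cos θ ^ 2 - 1) := by
      rw [← cos_two_mul, ← sin_two_mul, ← sin_pi_sub]
      ring_nf
    simp only [Fin.sum_univ_three, Matrix.cons_val, hdouble]
    field_simp
    ring
  have hdist₁ : r / cos θ * cos θ = r := div_mul_cancel₀ r hcos.ne'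
  have hdist₂ : r / cos θ * cos (π / 2 - 2 * θ) = 2 * r * sin θ := by
    rw [cos_pi_div_two_sub, sin_two_mul]
    field_simp
  have hhexagon : ⋂ i, slab (![u₁, u₂, u₃] i) (r / cos θ * cos (![θ, π / 2 - 2 * θ, θ] i)) =
      slab u₁ r ∩ (slab u₂ (2 * r * sin θ) ∩ slab u₃ r) := by
    ext p
    simp [Fin.forall_fin_succ, hdist₁, hdist₂]
  rwa [harea, hhexagon] at hpolygon

theorem hexagon_area_lower_bound_general (hE : Module.finrank ℝ E = 2) {u₁ u₂ u₃ : E}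
    (hu₁ : ‖u₁‖ = 1) (hu₂ : ‖u₂‖ = 1) (hu₃ : ‖u₃‖ = 1) {r h d₁ d₂ d₃ : ℝ} (hr : 0 < r)
    (hh : 0 ≤ h) (hhr : h ^ 2 ≤ 2 * r ^ 2) (hd₁ : r ≤ d₁) (hd₂ : h ≤ d₂) (hd₃ : r ≤ d₃) :
    ENNReal.ofReal (2 * h * √(4 * r ^ 2 - h ^ 2)) ≤
      volume {p : E | |⟪p, u₁⟫| ≤ d₁ ∧ |⟪p, u₂⟫| ≤ d₂ ∧ |⟪p, u₃⟫| ≤ d₃} := by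
  set s := h / (2 * r) with hs
  have hs₀ : 0 ≤ s := by positivity
  have hs_le : s ≤ √2 / 2 := by
    refine (sq_le_sq₀ hs₀ (by positivity)).1 ?_
    rw [hs, div_pow, div_pow, sq_sqrt zero_le_two, div_le_iff₀ (by positivity)]
    linarith
  have hsin : sin (arcsin s) = s :=
    sin_arcsin (by linarith) (by linarith [sqrt_two_lt_three_halves])
  have hθ : arcsin s ≤ π / 4 := by
    rw [arcsin_le_iff_le_sin' ⟨by linarith [pi_pos], by linarith [pi_pos]⟩, sin_pi_div_four]
    exact hs_le
  have hdist : 2 * r * s = h := by rw [hs]; field_simp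
  have hsqrt : 2 * r * √(1 - s ^ 2) = √(4 * r ^ 2 - h ^ 2) := by
    rw [← sqrt_sq (by positivity : 0 ≤ 2 * r), ← sqrt_mul (by positivity), ← hdist]
    ring_nf
  have harea : 4 * r ^ 2 * sin (2 * arcsin s) = 2 * h * √(4 * r ^ 2 - h ^ 2) := by
    rw [sin_two_mul, hsin, cos_arcsin, ← hsqrt, ← hdist]
    ring
  have hhexagon := ofReal_sin_two_mul_le_volume_inter_slab hE hu₁ hu₂ hu₃ hr.le
    (arcsin_nonneg.2 hs₀) hθ
  rw [harea, hsin, hdist] at hhexagon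
  exact hhexagon.trans (measure_mono (Set.inter_subset_inter (slab_mono u₁ hd₁)
    (Set.inter_subset_inter (slab_mono u₂ hd₂) (slab_mono u₃ hd₃))))

end Slab

theorem h₀_sq_le : h₀ ^ 2 ≤ 2 * (1 / 4) ^ 2 := by
  have hsqrt : √19 < 8 := by rw [sqrt_lt' (by norm_num)]; norm_num
  rw [h₀, sq_sqrt (by linarith)]
  linarith [sqrt_nonneg 19]

theorem two_mul_sqrt_four_mul_sq_sub_sq (h : ℝ) :
    2 * √(4 * (1 / 4) ^ 2 - h ^ 2) = √(1 - 4 * h ^ 2) := by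
  rw [show 1 - 4 * h ^ 2 = 2 ^ 2 * (4 * (1 / 4) ^ 2 - h ^ 2) by ring,
    sqrt_mul (by norm_num), sqrt_sq zero_le_two]

/-- The sharp area lower bound for the centrally symmetric comparison hexagon
whose center is at distance at least `1/4` from two pairs of opposite sides
and at least `h₀` from the remaining pair. -/
theorem hexagon_area_lower_bound
    (u₁ u₂ u₃ : EuclideanSpace ℝ (Fin 2))
    (hu₁ : ‖u₁‖ = 1) (hu₂ : ‖u₂‖ = 1) (hu₃ : ‖u₃‖ = 1)
    (h12 : LinearIndependent ℝ ![u₁, u₂])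
    (h13 : LinearIndependent ℝ ![u₁, u₃])
    (h23 : LinearIndependent ℝ ![u₂, u₃])
    (d₁ d₂ d₃ : ℝ) (hd₁ : d₁ ≥ 1/4) (hd₂ : d₂ ≥ h₀) (hd₃ : d₃ ≥ 1/4) :
    volume {p : EuclideanSpace ℝ (Fin 2) |
        |⟪p, u₁⟫| ≤ d₁ ∧ |⟪p, u₂⟫| ≤ d₂ ∧ |⟪p, u₃⟫| ≤ d₃} ≥
      ENNReal.ofReal (h₀ * Real.sqrt (1 - 4 * h₀ ^ 2)) := by
  rw [← two_mul_sqrt_four_mul_sq_sub_sq, mul_left_comm, ← mul_assoc]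
  exact hexagon_area_lower_bound_general finrank_euclideanSpace_fin hu₁ hu₂ hu₃ (by norm_num)
    (sqrt_nonneg _) h₀_sq_le hd₁ hd₂ hd₃
end

section
/- Let p, q be nonzero vectors in the Euclidean plane ℝ², let α ∈ (0, π) be the angle between p and q, and let d > 0. Suppose that every point of the affine line through p and q has Euclidean norm at least d. Then the area of the triangle with vertices 0, p, q, namely (1/2)·|p₁q₂ − p₂q₁|, is at least d²·tan(α/2). -/
open Real

/-! The foot of the interior angle bisector from the origin is a point of the segment `[p, q]` of
norm `2‖p‖‖q‖ cos (α / 2) / (‖p‖ + ‖q‖)`, which by AM-GM is at most `√(‖p‖‖q‖) cos (α / 2)`.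
So `d ^ 2 ≤ ‖p‖‖q‖ cos² (α / 2)`, and multiplying by `tan (α / 2)` turns the right-hand side into
`‖p‖‖q‖ sin α / 2`, the area of the triangle. -/

open InnerProductGeometry

open scoped RealInnerProductSpace

theorem add_mul_le_norm_smul_add_smul_of_forall_mem_segment {E : Type*} [SeminormedAddCommGroup E]
    [NormedSpace ℝ E] {p q : E} {d a b : ℝ} (hd : ∀ x ∈ segment ℝ p q, d ≤ ‖x‖)
    (ha : 0 ≤ a) (hb : 0 ≤ b) : (a + b) * d ≤ ‖a • p + b • q‖ := by
  rcases (add_nonneg ha hb).eq_or_lt with hab | hab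
  · simp [← hab]
  · have hmem : (a + b)⁻¹ • (a • p + b • q) ∈ segment ℝ p q :=
      mem_segment_iff_div.mpr
        ⟨a, b, ha, hb, hab, by simp only [smul_add, smul_smul, inv_mul_eq_div]⟩
    have hle := hd _ hmem
    rwa [norm_smul_of_nonneg (inv_nonneg.mpr hab.le), le_inv_mul_iff₀ hab] at hle

section InnerProductSpace

variable {V : Type*} [NormedAddCommGroup V] [InnerProductSpace ℝ V]

theorem norm_norm_smul_add_norm_smul (p q : V) :
    ‖‖q‖ • p + ‖p‖ • q‖ = 2 * (‖p‖ * ‖q‖) * cos (angle p q / 2) := by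
  have hcos : 0 ≤ cos (angle p q / 2) :=
    cos_nonneg_of_mem_Icc ⟨by linarith [angle_nonneg p q, pi_pos], by linarith [angle_le_pi p q]⟩
  refine (sq_eq_sq₀ (norm_nonneg _) (by positivity)).mp ?_
  calc ‖‖q‖ • p + ‖p‖ • q‖ ^ 2
      = 2 * (‖p‖ * ‖q‖) ^ 2 + 2 * (‖p‖ * ‖q‖) * ⟪p, q⟫ := by
        rw [norm_add_sq_real, norm_smul, norm_smul, norm_norm, norm_norm, real_inner_smul_left,
          real_inner_smul_right]
        ring
    _ = 2 * (‖p‖ * ‖q‖) ^ 2 * (1 + cos (angle p q)) := by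
        rw [← cos_angle_mul_norm_mul_norm]
        ring
    _ = (2 * (‖p‖ * ‖q‖) * cos (angle p q / 2)) ^ 2 := by
        rw [mul_pow _ (cos _), Real.cos_sq, mul_div_cancel₀ _ two_ne_zero]
        ring

theorem sq_le_norm_mul_norm_mul_cos_half_angle_sq {p q : V} (hp : p ≠ 0) (hq : q ≠ 0) {d : ℝ}
    (hd : 0 ≤ d) (hseg : ∀ x ∈ segment ℝ p q, d ≤ ‖x‖) :
    d ^ 2 ≤ ‖p‖ * ‖q‖ * cos (angle p q / 2) ^ 2 := by
  have hpq : 0 < 4 * (‖p‖ * ‖q‖) := by positivity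
  have hbisector : (‖q‖ + ‖p‖) * d ≤ 2 * (‖p‖ * ‖q‖) * cos (angle p q / 2) :=
    norm_norm_smul_add_norm_smul p q ▸
      add_mul_le_norm_smul_add_smul_of_forall_mem_segment hseg (norm_nonneg q) (norm_nonneg p)
  refine le_of_mul_le_mul_left ?_ hpq
  calc 4 * (‖p‖ * ‖q‖) * d ^ 2
      ≤ (‖q‖ + ‖p‖) ^ 2 * d ^ 2 := by
        gcongr
        linarith [four_mul_le_sq_add ‖q‖ ‖p‖]
    _ = ((‖q‖ + ‖p‖) * d) ^ 2 := (mul_pow _ _ 2).symm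
    _ ≤ (2 * (‖p‖ * ‖q‖) * cos (angle p q / 2)) ^ 2 := by gcongr
    _ = 4 * (‖p‖ * ‖q‖) * (‖p‖ * ‖q‖ * cos (angle p q / 2) ^ 2) := by ring

theorem triangle_area_lower_bound_general {p q : V} (hp : p ≠ 0) (hq : q ≠ 0)
    (hπ : angle p q ≠ π) {d : ℝ} (hd : 0 ≤ d) (hseg : ∀ x ∈ segment ℝ p q, d ≤ ‖x‖) :
    d ^ 2 * tan (angle p q / 2) ≤ 1 / 2 * (‖p‖ * ‖q‖ * sin (angle p q)) := by
  have hlt : angle p q < π := (angle_le_pi p q).lt_of_ne hπ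
  have hcos : cos (angle p q / 2) ≠ 0 :=
    (cos_pos_of_mem_Ioo ⟨by linarith [angle_nonneg p q, pi_pos], by linarith⟩).ne'
  have htan : 0 ≤ tan (angle p q / 2) :=
    tan_nonneg_of_nonneg_of_le_pi_div_two (by linarith [angle_nonneg p q]) (by linarith)
  have hsin : sin (angle p q) = 2 * sin (angle p q / 2) * cos (angle p q / 2) := by
    rw [← sin_two_mul, mul_div_cancel₀ _ two_ne_zero]
  calc d ^ 2 * tan (angle p q / 2)
      ≤ ‖p‖ * ‖q‖ * cos (angle p q / 2) ^ 2 * tan (angle p q / 2) := by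
        gcongr
        exact sq_le_norm_mul_norm_mul_cos_half_angle_sq hp hq hd hseg
    _ = ‖p‖ * ‖q‖ * (tan (angle p q / 2) * cos (angle p q / 2)) * cos (angle p q / 2) := by ring
    _ = 1 / 2 * (‖p‖ * ‖q‖ * sin (angle p q)) := by
        rw [tan_mul_cos hcos, hsin]
        ring

end InnerProductSpace

theorem abs_mul_sub_mul_eq_norm_mul_norm_mul_sin_angle (p q : EuclideanSpace ℝ (Fin 2)) :
    |p 0 * q 1 - p 1 * q 0| = ‖p‖ * ‖q‖ * sin (angle p q) := by
  rw [mul_comm (‖p‖ * ‖q‖), sin_angle_mul_norm_mul_norm, ← sqrt_sq_eq_abs]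
  congr 1
  simp only [PiLp.inner_apply, Fin.sum_univ_two, RCLike.inner_apply, conj_trivial]
  ring

/-- Among triangles with apex angle `α ∈ (0,π)` at the origin whose opposite
side lies on a line at distance at least `d` from the origin, the area is at
least `d² tan(α/2)`. -/
theorem triangle_area_lower_bound
    (p q : EuclideanSpace ℝ (Fin 2)) (hp : p ≠ 0) (hq : q ≠ 0)
    (α : ℝ) (hα : α = InnerProductGeometry.angle p q)
    (hα0 : 0 < α) (hαπ : α < Real.pi)
    (d : ℝ) (hd : 0 < d)
    (hline : ∀ t : ℝ, d ≤ ‖p + t • (q - p)‖) :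
    (1/2) * |p 0 * q 1 - p 1 * q 0| ≥ d ^ 2 * Real.tan (α / 2) := by
  have hseg : ∀ x ∈ segment ℝ p q, d ≤ ‖x‖ := by
    rw [segment_eq_image']
    rintro _ ⟨t, -, rfl⟩
    exact hline t
  subst hα
  rw [abs_mul_sub_mul_eq_norm_mul_norm_mul_sin_angle]
  exact triangle_area_lower_bound_general hp hq hαπ.ne hd.le hseg
end

section
/- For every real h with 0 < h < 1/2 and all α₁, α₂, α₃ ∈ (0, π) with α₁ + α₂ + α₃ = π, one has (1/8)·tan(α₁/2) + 2h²·tan(α₂/2) + (1/8)·tan(α₃/2) ≥ h·√(1 − 4h²). -/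
open Real

/-!
With `x, y, z` the tangents of the half-angles, `α₁ + α₂ + α₃ = π` becomes `xy + yz + zx = 1`. The
quadratic form `xy + yz + zx` has signature `(1, 2)`, so on its positive cone the reverse
Cauchy–Schwarz inequality bounds the square of a linear form `ax + by + cz` from below by the dual
form `2(ab + bc + ca) - (a² + b² + c²)`. For the weights `1/8, 2h², 1/8` the dual form equals
`h²(1 - 4h²)`.
-/

lemma dual_form_mul_le_sq_linear_form {R : Type*} [CommRing R] [LinearOrder R]
    [IsStrictOrderedRing R] (a b c : R) {x y z : R} (hq : 0 ≤ x * y + y * z + z * x) :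
    (2 * (a * b + b * c + c * a) - (a ^ 2 + b ^ 2 + c ^ 2)) * (x * y + y * z + z * x)
      ≤ (a * x + b * y + c * z) ^ 2 := by
  rcases hq.eq_or_lt with hq | hq
  · rw [← hq, mul_zero]
    positivity
  set q := x * y + y * z + z * x with q_def
  set D := 2 * (a * b + b * c + c * a) - (a ^ 2 + b ^ 2 + c ^ 2) with D_def
  -- The difference of the two sides is a quadratic form in `(a, b, c)` whose `a²`-coefficient is
  -- `(x + y)(x + z) = x² + q`; complete the square in `a`.
  have complete_square : (x ^ 2 + q) * ((a * x + b * y + c * z) ^ 2 - D * q) =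
      (a * (x + y) * (x + z) - b * z * (x + y) - c * y * (x + z)) ^ 2
        + q * (b * (x + y) - c * (x + z)) ^ 2 := by
    rw [q_def, D_def]
    ring
  have leading_coeff_pos : 0 < x ^ 2 + q := by positivity
  refine sub_nonneg.mp (nonneg_of_mul_nonneg_right ?_ leading_coeff_pos)
  rw [complete_square]
  positivity

lemma tan_mul_tan_add_tan_mul_tan_add_tan_mul_tan_eq_one {α β γ : ℝ} (hα : cos α ≠ 0)
    (hβ : cos β ≠ 0) (hγ : cos γ ≠ 0) (hsum : α + β + γ = π / 2) :
    tan α * tan β + tan β * tan γ + tan γ * tan α = 1 := by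
  have cos_sum : cos (α + β + γ) = 0 := by rw [hsum, cos_pi_div_two]
  rw [cos_add, cos_add, sin_add] at cos_sum
  simp only [tan_eq_sin_div_cos]
  field_simp
  linear_combination -cos_sum

theorem hexagon_analytic_core_general {a b c r α₁ α₂ α₃ : ℝ}
    (ha : 0 ≤ a) (hb : 0 ≤ b) (hc : 0 ≤ c)
    (hr : r ^ 2 ≤ 2 * (a * b + b * c + c * a) - (a ^ 2 + b ^ 2 + c ^ 2))
    (h₁ : α₁ ∈ Set.Ico 0 π) (h₂ : α₂ ∈ Set.Ico 0 π) (h₃ : α₃ ∈ Set.Ico 0 π)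
    (hsum : α₁ + α₂ + α₃ = π) :
    r ≤ a * tan (α₁ / 2) + b * tan (α₂ / 2) + c * tan (α₃ / 2) := by
  have cos_half_ne_zero {α : ℝ} (hα : α ∈ Set.Ico 0 π) : cos (α / 2) ≠ 0 :=
    (cos_pos_of_mem_Ioo ⟨by linarith [hα.1, pi_pos], by linarith [hα.2]⟩).ne'
  have tan_half_nonneg {α : ℝ} (hα : α ∈ Set.Ico 0 π) : 0 ≤ tan (α / 2) :=
    tan_nonneg_of_nonneg_of_le_pi_div_two (by linarith [hα.1]) (by linarith [hα.2])
  have tan_relation := tan_mul_tan_add_tan_mul_tan_add_tan_mul_tan_eq_one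
    (cos_half_ne_zero h₁) (cos_half_ne_zero h₂) (cos_half_ne_zero h₃) (by linarith)
  have dual_bound := dual_form_mul_le_sq_linear_form a b c (tan_relation ▸ zero_le_one)
  rw [tan_relation, mul_one] at dual_bound
  have sum_nonneg : 0 ≤ a * tan (α₁ / 2) + b * tan (α₂ / 2) + c * tan (α₃ / 2) := by
    have := tan_half_nonneg h₁
    have := tan_half_nonneg h₂
    have := tan_half_nonneg h₃
    positivity
  exact le_of_sq_le_sq (hr.trans dual_bound) sum_nonneg

/-- The analytic core of the comparison-hexagon area bound. -/
theorem hexagon_analytic_core (h : ℝ) (hh0 : 0 < h) (hh : h < 1/2)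
    (α₁ α₂ α₃ : ℝ)
    (h₁ : α₁ ∈ Set.Ioo 0 Real.pi) (h₂ : α₂ ∈ Set.Ioo 0 Real.pi)
    (h₃ : α₃ ∈ Set.Ioo 0 Real.pi) (hsum : α₁ + α₂ + α₃ = Real.pi) :
    (1/8) * Real.tan (α₁ / 2) + 2 * h ^ 2 * Real.tan (α₂ / 2)
      + (1/8) * Real.tan (α₃ / 2) ≥ h * Real.sqrt (1 - 4 * h ^ 2) := by
  refine hexagon_analytic_core_general (by norm_num) (by positivity) (by norm_num) ?_
    (Set.Ioo_subset_Ico_self h₁) (Set.Ioo_subset_Ico_self h₂) (Set.Ioo_subset_Ico_self h₃) hsum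
  rw [mul_pow, sq_sqrt (by nlinarith)]
  exact le_of_eq (by ring)
end

section
/- Let h₀ = √((8−√19)/72) and θ₀ = arctan √((8−√19)/2). Then 0 < θ₀ < π/3, and the pair (h₀, θ₀) satisfies the system 2h₀ = sin(θ₀/2) and 6h₀ = tan θ₀; moreover tan(θ₀/2) = 2h₀/√(1 − 4h₀²). -/
/-!
If `2h = sin (θ/2)` and `6h = tan θ`, then `cos θ = 1 - 8h²`, and `cos² θ (1 + tan² θ) = 1` becomes
`(1 - 8h²)² (1 + 36h²) = 1`, that is, `4h² (576h⁴ - 128h² + 5) = 0`. The nonzero roots are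
`h² = (8 ± √19)/72`, of which only the smaller one makes `cos θ = 1 - 8h²` nonnegative.
-/

open Real

theorem cos_arctan_eq_of_sq_mul_one_add_sq_eq_one {c x : ℝ} (hc : 0 ≤ c)
    (h : c ^ 2 * (1 + x ^ 2) = 1) : cos (arctan x) = c := by
  refine (sq_eq_sq₀ (cos_arctan_pos x).le hc).mp ?_
  rw [cos_sq_arctan, div_eq_iff (by positivity), h]

theorem sin_half_arctan_eq_of_sq_mul_one_add_sq_eq_one {x y : ℝ} (hx : 0 ≤ x) (hy : 0 ≤ y)
    (hc : 0 ≤ 1 - 2 * x ^ 2) (h : (1 - 2 * x ^ 2) ^ 2 * (1 + y ^ 2) = 1) :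
    sin (arctan y / 2) = x := by
  rw [sin_half_eq_sqrt (arctan_nonneg.mpr hy) (by linarith [arctan_lt_pi_div_two y, pi_pos]),
    cos_arctan_eq_of_sq_mul_one_add_sq_eq_one hc h]
  calc √((1 - (1 - 2 * x ^ 2)) / 2) = √(x ^ 2) := by ring_nf
    _ = x := sqrt_sq hx

theorem sin_half_arctan_six_mul_eq_two_mul {h : ℝ} (hh : 0 ≤ h) (hcos : 0 ≤ 1 - 8 * h ^ 2)
    (hroot : 576 * h ^ 4 - 128 * h ^ 2 + 5 = 0) : sin (arctan (6 * h) / 2) = 2 * h := by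
  apply sin_half_arctan_eq_of_sq_mul_one_add_sq_eq_one (by positivity) (by positivity)
  · linarith
  · linear_combination 4 * h ^ 2 * hroot

theorem tan_eq_sin_div_sqrt_one_sub_sin_sq {x : ℝ} (hl : -(π / 2) ≤ x) (hu : x ≤ π / 2) :
    tan x = sin x / √(1 - sin x ^ 2) := by
  rw [tan_eq_sin_div_cos, cos_eq_sqrt_one_sub_sin_sq hl hu]

/-- The parameters `h₀ = √((8−√19)/72)` and `θ₀ = arctan √((8−√19)/2)` of the
extremal nonpositively curved Dyck's surface satisfy the defining system
`2h₀ = sin(θ₀/2)`, `6h₀ = tan θ₀`, and moreover `tan(θ₀/2) = 2h₀/√(1−4h₀²)`,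
with `0 < θ₀ < π/3`. -/
theorem extremal_parameters :
    let h₀ : ℝ := Real.sqrt ((8 - Real.sqrt 19) / 72)
    let θ₀ : ℝ := Real.arctan (Real.sqrt ((8 - Real.sqrt 19) / 2))
    0 < θ₀ ∧ θ₀ < Real.pi / 3 ∧
      2 * h₀ = Real.sin (θ₀ / 2) ∧ 6 * h₀ = Real.tan θ₀ ∧
      Real.tan (θ₀ / 2) = 2 * h₀ / Real.sqrt (1 - 4 * h₀ ^ 2) := by
  intro h₀ θ₀
  have hs_sq : √19 ^ 2 = (19 : ℝ) := sq_sqrt (by norm_num)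
  have hs_gt : 4 < √19 := lt_sqrt_of_sq_lt (by norm_num)
  have hs_lt : √19 < 8 := (sqrt_lt' (by norm_num)).mpr (by norm_num)
  have hh_sq : h₀ ^ 2 = (8 - √19) / 72 := sq_sqrt (by linarith)
  have hsqrt : √((8 - √19) / 2) = 6 * h₀ := by
    rw [sqrt_eq_iff_eq_sq (by linarith) (by positivity), mul_pow, hh_sq]
    ring
  have hroot : 576 * h₀ ^ 4 - 128 * h₀ ^ 2 + 5 = 0 := by
    linear_combination (576 * (h₀ ^ 2 + (8 - √19) / 72) - 128) * hh_sq + hs_sq / 9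
  have hθ : θ₀ = arctan (6 * h₀) := congrArg arctan hsqrt
  have hpos : 0 < θ₀ := arctan_pos.mpr (sqrt_pos.mpr (by linarith))
  have hlt : θ₀ < π / 3 :=
    arctan_sqrt_three ▸ arctan_strictMono (sqrt_lt_sqrt (by linarith) (by linarith))
  have hsin : sin (θ₀ / 2) = 2 * h₀ :=
    hθ ▸ sin_half_arctan_six_mul_eq_two_mul (sqrt_nonneg _) (by linarith) hroot
  refine ⟨hpos, hlt, hsin.symm, by rw [hθ, tan_arctan], ?_⟩
  rw [tan_eq_sin_div_sqrt_one_sub_sin_sq (by linarith) (by linarith), hsin]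
  ring_nf
end

section
/- For every real h with 0 < h < 1/2, one has 1 − 2h + 3h·√(1 − 4h²) ≤ 1 + (1/12)·√(169 − 38√19), with equality if and only if h = √((8−√19)/72). -/
open Real

/-!
The ellipse `4x² + y² = 1` lies below its tangent at the point `(h₀, y₀)`. Replacing `√(1 - 4h²)` by
that tangent turns the area bound into a concave quadratic in `h`, and this quadratic has its vertex
at `h₀` precisely when `h₀` is a critical point of the area bound. At such a point `y₀` is the
positive root of `6y² - 2y - 3`, whence `y₀ = (1 + √19)/6`.
-/

/-- The area bound has the shape `1 + areaGain k a c h` with `(k, a, c) = (4, 2, 3)`: the summand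
`c * x * √(1 - k * x ^ 2)` is the area of the Voronoi cells, and `a * x` the collar area lost by
narrowing the collar from its width `1/2` at `x = 0`. -/
noncomputable def areaGain (k a c x : ℝ) : ℝ := c * x * √(1 - k * x ^ 2) - a * x

section CriticalPoint

variable {k a c x x₀ : ℝ}

theorem sqrt_one_sub_mul_sq_le_tangent (hk : 0 ≤ k) (hx : k * x ^ 2 ≤ 1) (hx₀ : k * x₀ ^ 2 < 1) :
    √(1 - k * x ^ 2) ≤ (1 - k * x₀ * x) / √(1 - k * x₀ ^ 2) := by
  rw [le_div_iff₀ (sqrt_pos.mpr (sub_pos.mpr hx₀))]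
  have amgm := two_mul_le_add_sq √(1 - k * x ^ 2) √(1 - k * x₀ ^ 2)
  rw [sq_sqrt (sub_nonneg.mpr hx), sq_sqrt (sub_pos.mpr hx₀).le] at amgm
  have gap : 0 ≤ k * (x - x₀) ^ 2 := by positivity
  linarith

-- `hcrit` says that the derivative of `areaGain k a c` vanishes at `x₀`, with `√(1 - k * x₀ ^ 2)`
-- cleared from the denominator.
theorem areaGain_add_mul_sq_le_of_critical (hk : 0 ≤ k) (hc : 0 ≤ c) (hx_nonneg : 0 ≤ x)
    (hx : k * x ^ 2 ≤ 1) (hx₀ : k * x₀ ^ 2 < 1)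
    (hcrit : c * (1 - 2 * k * x₀ ^ 2) = a * √(1 - k * x₀ ^ 2)) :
    areaGain k a c x + c * k * x₀ / √(1 - k * x₀ ^ 2) * (x - x₀) ^ 2 ≤ areaGain k a c x₀ := by
  have tangent := sqrt_one_sub_mul_sq_le_tangent hk hx hx₀
  have hy_pos : 0 < √(1 - k * x₀ ^ 2) := sqrt_pos.mpr (sub_pos.mpr hx₀)
  have hy_sq : √(1 - k * x₀ ^ 2) ^ 2 = 1 - k * x₀ ^ 2 := sq_sqrt (sub_pos.mpr hx₀).le
  unfold areaGain
  set y₀ := √(1 - k * x₀ ^ 2)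
  calc c * x * √(1 - k * x ^ 2) - a * x + c * k * x₀ / y₀ * (x - x₀) ^ 2
      ≤ c * x * ((1 - k * x₀ * x) / y₀) - a * x + c * k * x₀ / y₀ * (x - x₀) ^ 2 := by gcongr
    _ = c * x₀ * y₀ - a * x₀ := by
      field_simp
      linear_combination (x - x₀) * hcrit - c * x₀ * hy_sq

theorem areaGain_le_of_critical (hk : 0 ≤ k) (hc : 0 ≤ c) (hx_nonneg : 0 ≤ x)
    (hx : k * x ^ 2 ≤ 1) (hx₀_nonneg : 0 ≤ x₀) (hx₀ : k * x₀ ^ 2 < 1)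
    (hcrit : c * (1 - 2 * k * x₀ ^ 2) = a * √(1 - k * x₀ ^ 2)) :
    areaGain k a c x ≤ areaGain k a c x₀ :=
  le_of_add_le_of_nonneg_left
    (areaGain_add_mul_sq_le_of_critical hk hc hx_nonneg hx hx₀ hcrit) (by positivity)

theorem areaGain_eq_iff_of_critical (hk : 0 < k) (hc : 0 < c) (hx_nonneg : 0 ≤ x)
    (hx : k * x ^ 2 ≤ 1) (hx₀_pos : 0 < x₀) (hx₀ : k * x₀ ^ 2 < 1)
    (hcrit : c * (1 - 2 * k * x₀ ^ 2) = a * √(1 - k * x₀ ^ 2)) :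
    areaGain k a c x = areaGain k a c x₀ ↔ x = x₀ := by
  refine ⟨fun heq => ?_, fun hxx₀ => by rw [hxx₀]⟩
  have hbound := areaGain_add_mul_sq_le_of_critical hk.le hc.le hx_nonneg hx hx₀ hcrit
  have hcoeff : 0 < c * k * x₀ / √(1 - k * x₀ ^ 2) :=
    div_pos (by positivity) (sqrt_pos.mpr (sub_pos.mpr hx₀))
  by_contra hne
  have hdefect := mul_pos hcoeff (sq_pos_of_ne_zero (sub_ne_zero.mpr hne))
  linarith

end CriticalPoint

/-- The parameter `h₀` at which the area bound attains its maximum. -/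
noncomputable def optimalParameter : ℝ := √((8 - √19) / 72)

theorem sq_sqrt_nineteen : √19 ^ 2 = 19 :=
  sq_sqrt (by norm_num)

theorem three_lt_sqrt_nineteen : 3 < √19 :=
  lt_sqrt_of_sq_lt (by norm_num)

theorem sqrt_nineteen_lt_eight : √19 < 8 :=
  (sqrt_lt' (by norm_num)).mpr (by norm_num)

theorem optimalParameter_pos : 0 < optimalParameter :=
  sqrt_pos.mpr (div_pos (sub_pos.mpr sqrt_nineteen_lt_eight) (by norm_num))

theorem optimalParameter_sq : optimalParameter ^ 2 = (8 - √19) / 72 :=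
  sq_sqrt (div_pos (sub_pos.mpr sqrt_nineteen_lt_eight) (by norm_num)).le

theorem four_mul_optimalParameter_sq_lt_one : 4 * optimalParameter ^ 2 < 1 := by
  linarith [optimalParameter_sq, three_lt_sqrt_nineteen]

theorem sqrt_one_sub_four_mul_optimalParameter_sq :
    √(1 - 4 * optimalParameter ^ 2) = (1 + √19) / 6 := by
  rw [sqrt_eq_iff_eq_sq (sub_pos.mpr four_mul_optimalParameter_sq_lt_one).le (by positivity),
    optimalParameter_sq]
  linear_combination -(1 / 36) * sq_sqrt_nineteen

theorem optimalParameter_critical :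
    3 * (1 - 2 * 4 * optimalParameter ^ 2) = 2 * √(1 - 4 * optimalParameter ^ 2) := by
  rw [sqrt_one_sub_four_mul_optimalParameter_sq, optimalParameter_sq]
  ring

theorem sqrt_maximum_eq_mul_optimalParameter :
    √(169 - 38 * √19) = 6 * (√19 - 3) * optimalParameter := by
  have hradicand : 169 - 38 * √19 = (6 * (√19 - 3) * optimalParameter) ^ 2 := by
    rw [mul_pow, optimalParameter_sq]
    linear_combination (√19 / 2 - 7) * sq_sqrt_nineteen
  rw [hradicand, sqrt_sq]
  exact mul_nonneg (by linarith [three_lt_sqrt_nineteen]) optimalParameter_pos.le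

theorem areaGain_optimalParameter :
    areaGain 4 2 3 optimalParameter = 1 / 12 * √(169 - 38 * √19) := by
  rw [areaGain, sqrt_one_sub_four_mul_optimalParameter_sq, sqrt_maximum_eq_mul_optimalParameter]
  ring

/-- The area lower bound `1 − 2h + 3h√(1−4h²)` is maximized over `h ∈ (0,1/2)`
exactly at `h = √((8−√19)/72)`, with maximum value `1 + (1/12)√(169−38√19)`. -/
theorem area_bound_optimization (h : ℝ) (hh0 : 0 < h) (hh : h < 1/2) :
    1 - 2 * h + 3 * h * Real.sqrt (1 - 4 * h ^ 2)
        ≤ 1 + (1/12) * Real.sqrt (169 - 38 * Real.sqrt 19) ∧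
      (1 - 2 * h + 3 * h * Real.sqrt (1 - 4 * h ^ 2)
          = 1 + (1/12) * Real.sqrt (169 - 38 * Real.sqrt 19) ↔
        h = Real.sqrt ((8 - Real.sqrt 19) / 72)) := by
  have hh_sq : 4 * h ^ 2 ≤ 1 := by nlinarith
  have harea : 1 - 2 * h + 3 * h * √(1 - 4 * h ^ 2) = 1 + areaGain 4 2 3 h := by
    rw [areaGain]
    ring
  rw [harea, add_le_add_iff_left, add_right_inj, ← areaGain_optimalParameter]
  exact ⟨areaGain_le_of_critical (by norm_num) (by norm_num) hh0.le hh_sq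
      optimalParameter_pos.le four_mul_optimalParameter_sq_lt_one optimalParameter_critical,
    areaGain_eq_iff_of_critical (by norm_num) (by norm_num) hh0.le hh_sq
      optimalParameter_pos four_mul_optimalParameter_sq_lt_one optimalParameter_critical⟩
end

section
/- Let K ⊆ ℝ² be a convex set that is symmetric about the origin (K = −K), let p, q ∈ K with p ≠ q, and let h, x > 0. Suppose ‖p − q‖ ≥ x and every point of the affine line through p and q has Euclidean norm at least h. Then the two-dimensional Lebesgue measure of K is at least 2hx. -/
open Real MeasureTheory

/-!
`K` contains the parallelogram with vertices `±p`, `±q`, whose area is `2 |ω(p, q)|` for the area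
form `ω`. Since `ω(p, q) = ω(p, q - p)` is unchanged when `p` slides along the line through `p`
and `q`, we may replace `p` by the foot of the perpendicular from the origin; there `|ω|` is the
product of the distance from the origin to the line and `‖q - p‖`.
-/

open Module

open scoped Pointwise in
theorem neg_vadd_parallelepiped_add_sub {E : Type*} [AddCommGroup E] [Module ℝ E] (p q : E) :
    -p +ᵥ parallelepiped ![p + q, p - q] = convexHull ℝ ({p, q, -p, -q} : Set E) := by
  have hvertices : -p +ᵥ ∑ i, ({0, ![p + q, p - q] i} : Set E) = {p, q, -p, -q} := by
    have hp_vertex : -p + (p + q + (p - q)) = p := by abel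
    have hneg_q_vertex : -p + (p - q) = -q := by abel
    simp only [Fin.sum_univ_two, Matrix.cons_val_zero, Matrix.cons_val_one, Set.insert_eq,
      Set.union_add, Set.add_union, Set.singleton_add_singleton, Set.vadd_set_union,
      Set.vadd_set_singleton, vadd_eq_add, add_zero, zero_add, neg_add_cancel_left,
      hp_vertex, hneg_q_vertex]
    ac_rfl
  rw [parallelepiped_eq_convexHull, ← convexHull_vadd, hvertices]

theorem convexHull_pair_neg_subset {𝕜 E : Type*} [Semiring 𝕜] [PartialOrder 𝕜] [AddCommGroup E]
    [Module 𝕜 E] {K : Set E} (hK : Convex 𝕜 K) (hsym : K = -K) {p q : E} (hp : p ∈ K)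
    (hq : q ∈ K) : convexHull 𝕜 {p, q, -p, -q} ⊆ K := by
  have hneg {z : E} (hz : z ∈ K) : -z ∈ K := Set.mem_neg.1 (hsym ▸ hz)
  refine convexHull_min ?_ hK
  rintro z (rfl | rfl | rfl | rfl)
  exacts [hp, hq, hneg hp, hneg hq]

theorem volume_parallelepiped_eq_ofReal_abs_volumeForm {E : Type*} [NormedAddCommGroup E]
    [InnerProductSpace ℝ E] [FiniteDimensional ℝ E] [MeasurableSpace E] [BorelSpace E] {n : ℕ}
    [Fact (finrank ℝ E = n)] (o : Orientation ℝ E (Fin n)) (v : Fin n → E) :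
    volume (parallelepiped v) = ENNReal.ofReal |o.volumeForm v| := by
  rw [← o.measure_eq_volume, AlternatingMap.measure_parallelepiped]

theorem exists_inner_add_smul_eq_zero (𝕜 : Type*) {E : Type*} [RCLike 𝕜] [NormedAddCommGroup E]
    [InnerProductSpace 𝕜 E] (p v : E) : ∃ t : 𝕜, inner 𝕜 v (p + t • v) = 0 := by
  rcases eq_or_ne v 0 with rfl | hv
  · simp
  · have hvv : inner 𝕜 v v ≠ 0 := inner_self_ne_zero.2 hv
    refine ⟨-(inner 𝕜 v p / inner 𝕜 v v), ?_⟩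
    rw [inner_add_right, inner_smul_right, neg_mul, div_mul_cancel₀ _ hvv, add_neg_cancel]

section AreaForm

attribute [local instance] FiniteDimensional.of_fact_finrank_eq_two

variable {E : Type*} [NormedAddCommGroup E] [InnerProductSpace ℝ E] [Fact (finrank ℝ E = 2)]
  (o : Orientation ℝ E (Fin 2))

theorem volume_convexHull_pair_neg [MeasurableSpace E] [BorelSpace E] (p q : E) :
    volume (convexHull ℝ ({p, q, -p, -q} : Set E)) = ENNReal.ofReal (2 * |o.areaForm p q|) := by
  have hform : o.areaForm (p + q) (p - q) = -2 * o.areaForm p q := by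
    simp only [map_add, map_sub, LinearMap.add_apply, o.areaForm_apply_self, o.areaForm_swap q p]
    ring
  rw [← neg_vadd_parallelepiped_add_sub, measure_vadd,
    volume_parallelepiped_eq_ofReal_abs_volumeForm o, ← o.areaForm_to_volumeForm, hform,
    abs_mul, abs_neg, abs_two]

theorem exists_norm_add_smul_mul_norm_eq_abs_areaForm (p v : E) :
    ∃ t : ℝ, ‖p + t • v‖ * ‖v‖ = |o.areaForm p v| := by
  obtain ⟨t, ht⟩ := exists_inner_add_smul_eq_zero ℝ p v
  refine ⟨t, ?_⟩
  rw [← o.abs_areaForm_of_orthogonal (inner_eq_zero_symm.1 ht)]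
  simp

theorem symmetric_convex_area_lower_bound_general [MeasurableSpace E] [BorelSpace E]
    {K : Set E} (hK : Convex ℝ K) (hsym : K = -K) {p q : E} (hp : p ∈ K) (hq : q ∈ K)
    {h : ℝ} (hline : ∀ t : ℝ, h ≤ ‖p + t • (q - p)‖) :
    ENNReal.ofReal (2 * h * ‖p - q‖) ≤ volume K := by
  let o : Orientation ℝ E (Fin 2) := (finBasisOfFinrankEq ℝ E Fact.out).orientation
  have hheight : h * ‖p - q‖ ≤ |o.areaForm p q| := by
    obtain ⟨t, ht⟩ := exists_norm_add_smul_mul_norm_eq_abs_areaForm o p (q - p)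
    calc h * ‖p - q‖ ≤ ‖p + t • (q - p)‖ * ‖p - q‖ := by gcongr; exact hline t
      _ = |o.areaForm p (q - p)| := by rw [norm_sub_rev p q, ht]
      _ = |o.areaForm p q| := by simp
  calc ENNReal.ofReal (2 * h * ‖p - q‖)
      ≤ ENNReal.ofReal (2 * |o.areaForm p q|) := by rw [mul_assoc]; gcongr
    _ = volume (convexHull ℝ ({p, q, -p, -q} : Set E)) := (volume_convexHull_pair_neg o p q).symm
    _ ≤ volume K := measure_mono (convexHull_pair_neg_subset hK hsym hp hq)

end AreaForm

/-- A centrally symmetric convex set of the plane containing two points `p ≠ q`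
with `‖p − q‖ ≥ x`, lying on an affine line at distance at least `h` from the
origin, has area at least `2hx`. -/
theorem symmetric_convex_area_lower_bound
    (K : Set (EuclideanSpace ℝ (Fin 2))) (hK : Convex ℝ K) (hsym : K = -K)
    (p q : EuclideanSpace ℝ (Fin 2)) (hp : p ∈ K) (hq : q ∈ K) (hpq : p ≠ q)
    (h x : ℝ) (hh : 0 < h) (hx : 0 < x)
    (hlen : ‖p - q‖ ≥ x)
    (hline : ∀ t : ℝ, ‖p + t • (q - p)‖ ≥ h) :
    volume K ≥ ENNReal.ofReal (2 * h * x) :=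
  have : Fact (finrank ℝ (EuclideanSpace ℝ (Fin 2)) = 2) := ⟨finrank_euclideanSpace_fin⟩
  (ENNReal.ofReal_le_ofReal (by gcongr)).trans
    (symmetric_convex_area_lower_bound_general hK hsym hp hq hline)
end

section
/- Let a < b be real numbers, let h : ℝ → ℝ be continuous and strictly positive on [a,b], and let H : ℝ → ℝ be differentiable on [a,b] with H′(s) = 1/h(s) for all s ∈ [a,b]. Let f : ℝ → ℝ be continuously differentiable on [a,b] with f(a) = 0 and f(b) = 1. Then H(b) > H(a) and ∫ₐᵇ f′(s)²·h(s) ds ≥ 1/(H(b) − H(a)). -/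
open Real intervalIntegral

/-!
For a weight `w > 0`, integrating `0 ≤ w (t w⁻¹ - ‖u‖)²` shows that the quadratic polynomial
`t² ∫ w⁻¹ - 2 t ∫ ‖u‖ + ∫ ‖u‖² w` is nonnegative for every `t`, so its discriminant is nonpositive:
`(∫ ‖u‖)² ≤ (∫ w⁻¹) (∫ ‖u‖² w)`. For `u = f'` and `w = h` the fundamental theorem of calculus bounds
`∫ ‖f'‖` below by `‖f b - f a‖` and evaluates `∫ h⁻¹` as `H b - H a`.
-/

section WeightedCauchySchwarz

open MeasureTheory

theorem mul_mul_inv_sub_sq {K : Type*} [Field K] {w : K} (hw : w ≠ 0) (t r : K) :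
    w * (t * w⁻¹ - r) ^ 2 = w⁻¹ * (t * t) + -2 * r * t + r ^ 2 * w := by
  field_simp
  ring

variable {α E : Type*} {m : MeasurableSpace α} {μ : Measure α} [NormedAddCommGroup E]
  {u : α → E} {w : α → ℝ}

theorem integrable_of_integrable_inv_of_integrable_norm_sq_mul
    (hu : AEStronglyMeasurable u μ) (hw : ∀ᵐ x ∂μ, 0 < w x)
    (hinv : Integrable (fun x ↦ (w x)⁻¹) μ) (hsq : Integrable (fun x ↦ ‖u x‖ ^ 2 * w x) μ) :
    Integrable u μ := by
  refine (hinv.add hsq).mono' hu ?_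
  filter_upwards [hw] with x hx
  have hexpand := mul_mul_inv_sub_sq hx.ne' 1 ‖u x‖
  have hsquare : 0 ≤ w x * (1 * (w x)⁻¹ - ‖u x‖) ^ 2 := by positivity
  simp only [Pi.add_apply]
  linarith [norm_nonneg (u x)]

theorem sq_integral_norm_le_integral_inv_mul_integral_norm_sq_mul
    (hu : AEStronglyMeasurable u μ) (hw : ∀ᵐ x ∂μ, 0 < w x)
    (hinv : Integrable (fun x ↦ (w x)⁻¹) μ) (hsq : Integrable (fun x ↦ ‖u x‖ ^ 2 * w x) μ) :
    (∫ x, ‖u x‖ ∂μ) ^ 2 ≤ (∫ x, (w x)⁻¹ ∂μ) * ∫ x, ‖u x‖ ^ 2 * w x ∂μ := by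
  have hnorm : Integrable (fun x ↦ ‖u x‖) μ :=
    (integrable_of_integrable_inv_of_integrable_norm_sq_mul hu hw hinv hsq).norm
  have hquadratic (t : ℝ) : 0 ≤ (∫ x, (w x)⁻¹ ∂μ) * (t * t) + -2 * (∫ x, ‖u x‖ ∂μ) * t +
      ∫ x, ‖u x‖ ^ 2 * w x ∂μ := by
    calc
      0 ≤ ∫ x, w x * (t * (w x)⁻¹ - ‖u x‖) ^ 2 ∂μ := by
        refine integral_nonneg_of_ae ?_
        filter_upwards [hw] with x hx
        exact mul_nonneg hx.le (sq_nonneg _)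
      _ = ∫ x, ((w x)⁻¹ * (t * t) + -2 * ‖u x‖ * t + ‖u x‖ ^ 2 * w x) ∂μ := by
        refine integral_congr_ae ?_
        filter_upwards [hw] with x hx
        exact mul_mul_inv_sub_sq hx.ne' t ‖u x‖
      _ = _ := by
        have hinv' := hinv.mul_const (t * t)
        have hnorm' := (hnorm.const_mul (-2)).mul_const t
        have hsum : Integrable (fun x ↦ (w x)⁻¹ * (t * t) + -2 * ‖u x‖ * t) μ := hinv'.add hnorm'
        rw [integral_add hsum hsq, integral_add hinv' hnorm',
          MeasureTheory.integral_mul_const, MeasureTheory.integral_mul_const,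
          MeasureTheory.integral_const_mul]
  have hdiscrim := discrim_le_zero hquadratic
  rw [discrim] at hdiscrim
  linarith

end WeightedCauchySchwarz

section WeightedEnergy

open MeasureTheory Set

variable {E : Type*} [NormedAddCommGroup E] [NormedSpace ℝ E] [CompleteSpace E]

theorem norm_sub_sq_le_sub_mul_integral_norm_deriv_sq_mul {a b : ℝ} (hab : a ≤ b)
    {h H : ℝ → ℝ} {f f' : ℝ → E}
    (hpos : ∀ s ∈ Ioo a b, 0 < h s)
    (hH_cont : ContinuousOn H (Icc a b)) (hH : ∀ s ∈ Ioo a b, HasDerivAt H (h s)⁻¹ s)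
    (hf_cont : ContinuousOn f (Icc a b)) (hf : ∀ s ∈ Ioo a b, HasDerivAt f (f' s) s)
    (henergy : IntervalIntegrable (fun s ↦ ‖f' s‖ ^ 2 * h s) volume a b) :
    ‖f b - f a‖ ^ 2 ≤ (H b - H a) * ∫ s in a..b, ‖f' s‖ ^ 2 * h s := by
  have hf'_meas : AEStronglyMeasurable f' (volume.restrict (Ioo a b)) :=
    (aestronglyMeasurable_deriv f _).congr <|
      ae_restrict_of_forall_mem measurableSet_Ioo fun s hs ↦ (hf s hs).deriv
  have hpos_ae : ∀ᵐ s ∂volume.restrict (Ioo a b), 0 < h s :=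
    ae_restrict_of_forall_mem measurableSet_Ioo hpos
  have hinv : IntervalIntegrable (fun s ↦ (h s)⁻¹) volume a b :=
    (intervalIntegrable_iff_integrableOn_Ioc_of_le hab).mpr <|
      integrableOn_deriv_of_nonneg hH_cont hH fun s hs ↦ (inv_pos.mpr (hpos s hs)).le
  have hinvIoo := (intervalIntegrable_iff_integrableOn_Ioo_of_le hab).mp hinv
  have henergyIoo := (intervalIntegrable_iff_integrableOn_Ioo_of_le hab).mp henergy
  have hf'_int : IntervalIntegrable f' volume a b :=
    (intervalIntegrable_iff_integrableOn_Ioo_of_le hab).mpr <|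
      integrable_of_integrable_inv_of_integrable_norm_sq_mul hf'_meas hpos_ae hinvIoo henergyIoo
  rw [← integral_eq_sub_of_hasDerivAt_of_le hab hf_cont hf hf'_int,
    ← integral_eq_sub_of_hasDerivAt_of_le hab hH_cont hH hinv]
  simp only [integral_of_le hab, integral_Ioc_eq_integral_Ioo]
  calc
    ‖∫ s in Ioo a b, f' s‖ ^ 2 ≤ (∫ s in Ioo a b, ‖f' s‖) ^ 2 := by
      gcongr
      exact norm_integral_le_integral_norm f'
    _ ≤ (∫ s in Ioo a b, (h s)⁻¹) * ∫ s in Ioo a b, ‖f' s‖ ^ 2 * h s :=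
      sq_integral_norm_le_integral_inv_mul_integral_norm_sq_mul hf'_meas hpos_ae hinvIoo henergyIoo

theorem muetzel_one_dimensional_general {a b : ℝ} (hab : a < b) {h H : ℝ → ℝ} {f f' : ℝ → E}
    (hpos : ∀ s ∈ Ioo a b, 0 < h s)
    (hH_cont : ContinuousOn H (Icc a b)) (hH : ∀ s ∈ Ioo a b, HasDerivAt H (1 / h s) s)
    (hf_cont : ContinuousOn f (Icc a b)) (hf : ∀ s ∈ Ioo a b, HasDerivAt f (f' s) s)
    (henergy : IntervalIntegrable (fun s ↦ ‖f' s‖ ^ 2 * h s) volume a b) :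
    H a < H b ∧ ‖f b - f a‖ ^ 2 / (H b - H a) ≤ ∫ s in a..b, ‖f' s‖ ^ 2 * h s := by
  simp only [one_div] at hH
  have hmono : StrictMonoOn H (Icc a b) := by
    refine strictMonoOn_of_hasDerivWithinAt_pos (f' := fun s ↦ (h s)⁻¹) (convex_Icc a b) hH_cont
      ?_ ?_ <;> rw [interior_Icc]
    · exact fun s hs ↦ (hH s hs).hasDerivWithinAt
    · exact fun s hs ↦ inv_pos.mpr (hpos s hs)
  have hlt : H a < H b := hmono (left_mem_Icc.mpr hab.le) (right_mem_Icc.mpr hab.le) hab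
  refine ⟨hlt, ?_⟩
  rw [div_le_iff₀' (sub_pos.mpr hlt)]
  exact norm_sub_sq_le_sub_mul_integral_norm_deriv_sq_mul hab.le hpos hH_cont hH hf_cont hf henergy

end WeightedEnergy

/-- The one-dimensional core of Muetzel's capacity lemma: if `h > 0` is
continuous on `[a,b]`, `H` is a primitive of `1/h` and `f` is continuously
differentiable with `f(a) = 0`, `f(b) = 1`, then `H(b) > H(a)` and the weighted
Dirichlet energy `∫ₐᵇ f′² h` is at least `1/(H(b) − H(a))`. -/
theorem muetzel_one_dimensional
    (a b : ℝ) (hab : a < b) (h H f f' : ℝ → ℝ)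
    (hh_cont : ContinuousOn h (Set.Icc a b))
    (hh_pos : ∀ s ∈ Set.Icc a b, 0 < h s)
    (hH : ∀ s ∈ Set.Icc a b, HasDerivAt H (1 / h s) s)
    (hf : ∀ s ∈ Set.Icc a b, HasDerivAt f (f' s) s)
    (hf' : ContinuousOn f' (Set.Icc a b))
    (hfa : f a = 0) (hfb : f b = 1) :
    H a < H b ∧ 1 / (H b - H a) ≤ ∫ s in a..b, (f' s) ^ 2 * h s := by
  have hsub := Set.Ioo_subset_Icc_self (a := a) (b := b)
  have henergy : IntervalIntegrable (fun s ↦ ‖f' s‖ ^ 2 * h s) MeasureTheory.volume a b :=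
    ((hf'.norm.pow 2).mul hh_cont).intervalIntegrable_of_Icc hab.le
  simpa [hfa, hfb] using muetzel_one_dimensional_general hab (fun s hs ↦ hh_pos s (hsub hs))
    (HasDerivAt.continuousOn hH) (fun s hs ↦ hH s (hsub hs))
    (HasDerivAt.continuousOn hf) (fun s hs ↦ hf s (hsub hs)) henergy
end

section
/- Let ℓ > 0, let a, b : ℝ → ℝ be continuous functions with a(t) < b(t) for all t ∈ [0,ℓ], and let u : ℝ² → ℝ be continuously differentiable with u(t, a(t)) = 0 and u(t, b(t)) = 1 for all t ∈ [0,ℓ]. Let H(s) = 2·arctan(exp s). Then ∫₀^ℓ ( ∫_{a(t)}^{b(t)} (∂u/∂s)(t,s)²·cosh(s) ds ) dt ≥ ∫₀^ℓ 1/(H(b(t)) − H(a(t))) dt. -/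
open Real intervalIntegral

/-!
On each fibre of the collar, Cauchy–Schwarz applied to `∂u/∂s = (∂u/∂s · √w) · (1 / √w)` with
`w = cosh` bounds `(u(t, b t) - u(t, a t))² = 1` by the energy of the fibre times `∫ 1 / w`, and
`∫ 1 / cosh = H(b t) - H(a t)`. The bound then integrates over `t`, both sides being continuous
in `t`.
-/

open MeasureTheory Set

/- Complete the square at the equality case of the inequality: with `c = ∫ f / ∫ g`, integrate
`2 * c * f - c ^ 2 * g ≤ f ^ 2 / g`. -/
lemma sq_integral_div_le_integral_sq_div {X : Type*} [MeasurableSpace X] {μ : Measure X}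
    {f g : X → ℝ} (hf : Integrable f μ) (hg : Integrable g μ)
    (hfg : Integrable (fun x ↦ f x ^ 2 / g x) μ) (hg_pos : ∀ᵐ x ∂μ, 0 < g x) :
    (∫ x, f x ∂μ) ^ 2 / ∫ x, g x ∂μ ≤ ∫ x, f x ^ 2 / g x ∂μ := by
  set c := (∫ x, f x ∂μ) / ∫ x, g x ∂μ with hc
  have hfc : Integrable (fun x ↦ 2 * c * f x) μ := hf.const_mul _
  have hgc : Integrable (fun x ↦ c ^ 2 * g x) μ := hg.const_mul _
  have tangent_le : ∀ᵐ x ∂μ, 2 * c * f x - c ^ 2 * g x ≤ f x ^ 2 / g x := by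
    filter_upwards [hg_pos] with x hx
    rw [le_div_iff₀ hx]
    linarith [sq_nonneg (f x - c * g x)]
  calc (∫ x, f x ∂μ) ^ 2 / ∫ x, g x ∂μ
      = 2 * c * ∫ x, f x ∂μ - c ^ 2 * ∫ x, g x ∂μ := by
        rcases eq_or_ne (∫ x, g x ∂μ) 0 with h | h
        · simp [hc, h]
        · rw [hc]
          field_simp
          ring
    _ = ∫ x, (2 * c * f x - c ^ 2 * g x) ∂μ := by
        rw [MeasureTheory.integral_sub hfc hgc, MeasureTheory.integral_const_mul,
          MeasureTheory.integral_const_mul]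
    _ ≤ ∫ x, f x ^ 2 / g x ∂μ := integral_mono_ae (hfc.sub hgc) hfg tangent_le

lemma sq_sub_div_integral_inv_le_integral_sq_mul {v v' w : ℝ → ℝ} {α β : ℝ} (hαβ : α ≤ β)
    (hv : ∀ s ∈ Icc α β, HasDerivAt v (v' s) s) (hv' : ContinuousOn v' (Icc α β))
    (hw : ContinuousOn w (Icc α β)) (hw_pos : ∀ s ∈ Icc α β, 0 < w s) :
    (v β - v α) ^ 2 / ∫ s in α..β, (w s)⁻¹ ≤ ∫ s in α..β, v' s ^ 2 * w s := by
  have integrable_of_continuousOn {f : ℝ → ℝ} (hf : ContinuousOn f (Icc α β)) :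
      Integrable f (volume.restrict (Ioc α β)) :=
    hf.integrableOn_Icc.mono_set Ioc_subset_Icc_self
  have ftc : ∫ s in α..β, v' s = v β - v α := by
    rw [← uIcc_of_le hαβ] at hv hv'
    exact integral_eq_sub_of_hasDerivAt hv hv'.intervalIntegrable
  rw [← ftc, integral_of_le hαβ, integral_of_le hαβ, integral_of_le hαβ]
  simpa only [div_inv_eq_mul] using sq_integral_div_le_integral_sq_div
    (integrable_of_continuousOn hv')
    (integrable_of_continuousOn (hw.fun_inv₀ fun s hs ↦ (hw_pos s hs).ne'))
    (by simpa only [div_inv_eq_mul] using integrable_of_continuousOn ((hv'.fun_pow 2).fun_mul hw))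
    (ae_restrict_of_forall_mem measurableSet_Ioc fun s hs ↦
      inv_pos.2 (hw_pos s (Ioc_subset_Icc_self hs)))

lemma continuous_parametric_integral_of_continuous_endpoints {X E : Type*} [TopologicalSpace X]
    [NormedAddCommGroup E] [NormedSpace ℝ E] {μ : Measure ℝ} [IsLocallyFiniteMeasure μ]
    [NullSingletonClass μ] {f : X → ℝ → E} (hf : Continuous f.uncurry) {a b : X → ℝ}
    (ha : Continuous a) (hb : Continuous b) :
    Continuous fun x ↦ ∫ s in a x..b x, f x s ∂μ := by
  have integral_eq_sub (x : X) : ∫ s in a x..b x, f x s ∂μ =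
      (∫ s in 0..b x, f x s ∂μ) - ∫ s in 0..a x, f x s ∂μ :=
    (integral_interval_sub_left ((hf.uncurry_left x).intervalIntegrable _ _)
      ((hf.uncurry_left x).intervalIntegrable _ _)).symm
  simp only [integral_eq_sub]
  exact (continuous_parametric_intervalIntegral_of_continuous hf hb).sub
    (continuous_parametric_intervalIntegral_of_continuous hf ha)

lemma continuous_deriv_snd_of_contDiff {𝕜 E F : Type*} [NontriviallyNormedField 𝕜]
    [NormedAddCommGroup E] [NormedSpace 𝕜 E] [NormedAddCommGroup F] [NormedSpace 𝕜 F]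
    {u : E × 𝕜 → F} (hu : ContDiff 𝕜 1 u) :
    Continuous fun p : E × 𝕜 ↦ deriv (fun s ↦ u (p.1, s)) p.2 := by
  have hu_uncurry : ContDiff 𝕜 1 (Function.uncurry fun (p : E × 𝕜) s ↦ u (p.1, s)) :=
    hu.comp (contDiff_fst.fst.prodMk contDiff_snd)
  simp only [← fderiv_apply_one_eq_deriv]
  exact (Continuous.fderiv_one hu_uncurry continuous_snd).clm_apply continuous_const

lemma hasDerivAt_two_mul_arctan_exp (s : ℝ) :
    HasDerivAt (fun s ↦ 2 * arctan (exp s)) (cosh s)⁻¹ s := by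
  refine ((hasDerivAt_exp s).arctan.const_mul 2).congr_deriv ?_
  rw [cosh_eq, exp_neg]
  field_simp
  ring

lemma integral_inv_cosh (α β : ℝ) :
    ∫ s in α..β, (cosh s)⁻¹ = 2 * arctan (exp β) - 2 * arctan (exp α) :=
  integral_eq_sub_of_hasDerivAt (fun s _ ↦ hasDerivAt_two_mul_arctan_exp s)
    ((continuous_cosh.fun_inv₀ fun s ↦ (cosh_pos s).ne').intervalIntegrable _ _)

/-- Here `(t, s)` are Fermi coordinates for an arbitrary metric `w(t,s)² dt² + ds²`. -/
theorem muetzel_collar_capacity_general {ℓ : ℝ} (hℓ : 0 ≤ ℓ)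
    {a b : ℝ → ℝ} (ha : Continuous a) (hb : Continuous b) (hab : ∀ t ∈ Icc 0 ℓ, a t < b t)
    {w : ℝ → ℝ → ℝ} (hw : Continuous w.uncurry) (hw_pos : ∀ t s, 0 < w t s)
    {u u' : ℝ → ℝ → ℝ} (hu : ∀ t ∈ Icc 0 ℓ, ∀ s ∈ Icc (a t) (b t), HasDerivAt (u t) (u' t s) s)
    (hu' : Continuous u'.uncurry)
    (hu0 : ∀ t ∈ Icc 0 ℓ, u t (a t) = 0) (hu1 : ∀ t ∈ Icc 0 ℓ, u t (b t) = 1) :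
    ∫ t in 0..ℓ, 1 / ∫ s in a t..b t, (w t s)⁻¹ ≤
      ∫ t in 0..ℓ, ∫ s in a t..b t, u' t s ^ 2 * w t s := by
  have hw_inv : Continuous (Function.uncurry fun t s ↦ (w t s)⁻¹) :=
    hw.inv₀ fun p ↦ (hw_pos p.1 p.2).ne'
  have integral_inv_pos : ∀ t ∈ Icc 0 ℓ, 0 < ∫ s in a t..b t, (w t s)⁻¹ := fun t ht ↦
    intervalIntegral_pos_of_pos ((hw_inv.uncurry_left t).intervalIntegrable _ _)
      (fun s ↦ inv_pos.2 (hw_pos t s)) (hab t ht)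
  have bound_continuousOn : ContinuousOn (fun t ↦ 1 / ∫ s in a t..b t, (w t s)⁻¹) (Icc 0 ℓ) :=
    continuousOn_const.div
      (continuous_parametric_integral_of_continuous_endpoints hw_inv ha hb).continuousOn
      fun t ht ↦ (integral_inv_pos t ht).ne'
  have energy_continuous : Continuous fun t ↦ ∫ s in a t..b t, u' t s ^ 2 * w t s :=
    continuous_parametric_integral_of_continuous_endpoints ((hu'.pow 2).mul hw) ha hb
  refine integral_mono_on hℓ (bound_continuousOn.intervalIntegrable_of_Icc hℓ)
    (energy_continuous.intervalIntegrable _ _) fun t ht ↦ ?_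
  simpa only [hu0 t ht, hu1 t ht, sub_zero, one_pow] using
    sq_sub_div_integral_inv_le_integral_sq_mul (hab t ht).le (hu t ht)
      (hu'.uncurry_left t).continuousOn (hw.uncurry_left t).continuousOn fun s _ ↦ hw_pos t s

/-- Muetzel's lower bound for the capacity of a hyperbolic collar in Fermi
coordinates: the Dirichlet-type energy of a `C¹` function `u` which is `0` on
the curve `s = a(t)` and `1` on the curve `s = b(t)` is bounded below using
the primitive `H(s) = 2 arctan(eˢ)` of `1/cosh(s)`. -/
theorem muetzel_collar_capacity
    (ℓ : ℝ) (hℓ : 0 < ℓ)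
    (a b : ℝ → ℝ) (ha : Continuous a) (hb : Continuous b)
    (hab : ∀ t ∈ Set.Icc (0:ℝ) ℓ, a t < b t)
    (u : ℝ × ℝ → ℝ) (hu : ContDiff ℝ 1 u)
    (hu0 : ∀ t ∈ Set.Icc (0:ℝ) ℓ, u (t, a t) = 0)
    (hu1 : ∀ t ∈ Set.Icc (0:ℝ) ℓ, u (t, b t) = 1) :
    (∫ t in (0:ℝ)..ℓ, ∫ s in a t..b t,
        (deriv (fun s' => u (t, s')) s) ^ 2 * Real.cosh s) ≥
      ∫ t in (0:ℝ)..ℓ, 1 /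
        (2 * Real.arctan (Real.exp (b t)) - 2 * Real.arctan (Real.exp (a t))) := by
  have hu_deriv (t s : ℝ) : HasDerivAt (fun s' ↦ u (t, s')) (deriv (fun s' ↦ u (t, s')) s) s :=
    ((hu.differentiable one_ne_zero).comp (by fun_prop) s).hasDerivAt
  simpa only [integral_inv_cosh] using muetzel_collar_capacity_general hℓ.le ha hb hab
    (w := fun _ ↦ cosh) (continuous_cosh.comp continuous_snd) (fun _ ↦ cosh_pos)
    (fun t _ s _ ↦ hu_deriv t s) (continuous_deriv_snd_of_contDiff hu) hu0 hu1
end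

section
/- Let ℓ = 2·arccosh((5+√17)/2), let a(t) = artanh(cosh(t)·tanh(ℓ/4)), and let H(s) = 2·arctan(exp s). Then (i) cosh(t)·tanh(ℓ/4) < 1 for every t ∈ [0, ℓ/12], so a(t) is well defined there; and (ii) 12·∫₀^{ℓ/12} 1/(H(a(t)) − H(−a(t))) dt ≥ 2.294. -/
open Real intervalIntegral

/-- `ℓ = 2 arccosh((5+√17)/2)`, where `arccosh x = log (x + √(x²−1))`:
the boundary length of the maximal hyperbolic one-holed torus. -/
noncomputable def ellExt : ℝ :=
  2 * Real.log ((5 + Real.sqrt 17) / 2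
    + Real.sqrt (((5 + Real.sqrt 17) / 2) ^ 2 - 1))

/-- The half-width `a(t) = artanh(cosh t · tanh(ℓ/4))` of the collar of the
extremal hyperbolic Dyck's surface in Fermi coordinates, where
`artanh x = (1/2) log((1+x)/(1−x))`. -/
noncomputable def collarHalfWidth (t : ℝ) : ℝ :=
  (1/2) * Real.log ((1 + Real.cosh t * Real.tanh (ellExt / 4)) /
    (1 - Real.cosh t * Real.tanh (ellExt / 4)))

/-- The primitive `H(s) = 2 arctan(eˢ)` of `1/cosh s`. -/
noncomputable def Hcap (s : ℝ) : ℝ := 2 * Real.arctan (Real.exp s)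

/-!
The increment `H(a) - H(-a)` is twice the Gudermannian of `a`, that is `2 arcsin (tanh a)`, so
with `T = tanh(ℓ/4)` and `L = ℓ/12` the bound is `6 ∫₀ᴸ dt / arcsin(T cosh t)`. Since `θ² cos θ`
increases on `[0, π/3]`, the function `1 / arcsin` is convex on `(0, √3/2]`, which contains all the
values `T cosh t`; as their mean is `T sinh L / L`, Jensen's inequality gives at least
`6 L / arcsin(T sinh L / L) ≈ 2.29401`.

The margin over `2.294` is only `10⁻⁵`, whence the seven-digit estimates of `L`, `T` and `sinh L`.
They start from `cosh(6L) = (5 + √17)/2`, which yields `T² = (1 + √17)/8` and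
`(4 sinh³ L + 3 sinh L)² = sinh²(3L) = (3 + √17)/4`.
-/

lemma sin_two_mul_arctan_exp_sub_pi_div_two (a : ℝ) :
    sin (2 * arctan (exp a) - π / 2) = tanh a := by
  rw [sin_sub_pi_div_two, cos_two_mul, cos_sq_arctan, tanh_eq, exp_neg]
  have := exp_pos a
  field_simp
  ring

lemma Hcap_sub_Hcap_neg (a : ℝ) : Hcap a - Hcap (-a) = 2 * arcsin (tanh a) := by
  have harcsin : arcsin (tanh a) = 2 * arctan (exp a) - π / 2 := by
    refine arcsin_eq_of_sin_eq (sin_two_mul_arctan_exp_sub_pi_div_two a) ⟨?_, ?_⟩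
    · linarith [arctan_pos.2 (exp_pos a)]
    · linarith [arctan_lt_pi_div_two (exp a)]
  rw [harcsin, Hcap, Hcap, exp_neg, arctan_inv_of_pos (exp_pos a)]
  ring

lemma Hcap_sub_Hcap_neg_collarHalfWidth {t : ℝ}
    (ht : cosh t * tanh (ellExt / 4) ∈ Set.Ioo (-1) 1) :
    Hcap (collarHalfWidth t) - Hcap (-collarHalfWidth t) =
      2 * arcsin (cosh t * tanh (ellExt / 4)) := by
  have hartanh : collarHalfWidth t = artanh (cosh t * tanh (ellExt / 4)) :=
    (artanh_eq_half_log (Set.Ioo_subset_Icc_self ht)).symm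
  rw [Hcap_sub_Hcap_neg, hartanh, tanh_artanh ht]

lemma monotoneOn_sq_mul_cos : MonotoneOn (fun θ : ℝ => θ ^ 2 * cos θ) (Set.Icc 0 (π / 3)) := by
  have hderiv (θ : ℝ) :
      HasDerivAt (fun θ => θ ^ 2 * cos θ) (θ * (2 * cos θ - θ * sin θ)) θ := by
    refine ((hasDerivAt_pow 2 θ).mul (hasDerivAt_cos θ)).congr_deriv ?_
    push_cast
    ring
  refine monotoneOn_of_hasDerivWithinAt_nonneg (convex_Icc _ _) (by fun_prop)
    (fun θ _ => (hderiv θ).hasDerivWithinAt) fun θ hθ => ?_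
  obtain ⟨hθ₀, hθ₁⟩ := interior_subset hθ
  have hcos : 1 / 2 ≤ cos θ := by
    rw [← cos_pi_div_three]
    exact cos_le_cos_of_nonneg_of_le_pi hθ₀ (by linarith [pi_pos]) hθ₁
  have hsin : sin θ ≤ 0.87 := by
    nlinarith [sin_sq_add_cos_sq θ]
  have hmul : θ * sin θ ≤ 1 := by
    nlinarith [pi_lt_d2]
  exact mul_nonneg hθ₀ (by linarith)

lemma arcsin_le_pi_div_three {x : ℝ} (hx : x ≤ √3 / 2) : arcsin x ≤ π / 3 := by
  rw [← sin_pi_div_three] at hx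
  exact (arcsin_le_arcsin hx).trans_eq (arcsin_sin (by linarith [pi_pos]) (by linarith [pi_pos]))

lemma sqrt_three_div_two_lt_one : √3 / 2 < 1 := by
  rw [div_lt_one two_pos, sqrt_lt' two_pos]
  norm_num

lemma hasDerivAt_inv_arcsin {x : ℝ} (h₀ : 0 < x) (h₁ : x < 1) :
    HasDerivAt (fun x => (arcsin x)⁻¹) (-(arcsin x ^ 2 * cos (arcsin x))⁻¹) x := by
  refine ((hasDerivAt_arcsin (by linarith) h₁.ne).fun_inv (arcsin_pos.2 h₀).ne').congr_deriv ?_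
  rw [cos_arcsin, mul_inv]
  ring

lemma convexOn_inv_arcsin : ConvexOn ℝ (Set.Ioc 0 (√3 / 2)) fun x => (arcsin x)⁻¹ := by
  have hderiv {x : ℝ} (hx : x ∈ Set.Ioc 0 (√3 / 2)) :
      HasDerivAt (fun x => (arcsin x)⁻¹) (-(arcsin x ^ 2 * cos (arcsin x))⁻¹) x :=
    hasDerivAt_inv_arcsin hx.1 (hx.2.trans_lt sqrt_three_div_two_lt_one)
  refine MonotoneOn.convexOn_of_deriv (convex_Ioc _ _)
    (fun x hx => (hderiv hx).continuousAt.continuousWithinAt)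
    (fun x hx => (hderiv (interior_subset hx)).differentiableAt.differentiableWithinAt) ?_
  intro x hx y hy hxy
  have hx' := interior_subset hx
  have hy' := interior_subset hy
  rw [(hderiv hx').deriv, (hderiv hy').deriv]
  have hmono : arcsin x ^ 2 * cos (arcsin x) ≤ arcsin y ^ 2 * cos (arcsin y) :=
    monotoneOn_sq_mul_cos ⟨arcsin_nonneg.2 hx'.1.le, arcsin_le_pi_div_three hx'.2⟩
      ⟨arcsin_nonneg.2 hy'.1.le, arcsin_le_pi_div_three hy'.2⟩ (arcsin_le_arcsin hxy)
  have hpos : 0 < arcsin x ^ 2 * cos (arcsin x) := by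
    refine mul_pos (pow_pos (arcsin_pos.2 hx'.1) 2) (cos_pos_of_mem_Ioo ⟨?_, ?_⟩)
    · linarith [arcsin_pos.2 hx'.1, pi_pos]
    · linarith [arcsin_le_pi_div_three hx'.2, pi_pos]
  gcongr

lemma convexOn_map_interval_average_le {E : Type*} [NormedAddCommGroup E] [NormedSpace ℝ E]
    [CompleteSpace E] {f : ℝ → E} {g : E → ℝ} {s : Set E} {a b : ℝ} (hg : ConvexOn ℝ s g)
    (hgc : ContinuousOn g s) (hs : IsClosed s) (hab : a < b) (hf : ContinuousOn f (Set.Icc a b))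
    (hfs : Set.MapsTo f (Set.Icc a b) s) :
    g (⨍ t in a..b, f t) ≤ ⨍ t in a..b, g (f t) := by
  have hsub : Set.Ioc a b ⊆ Set.Icc a b := Set.Ioc_subset_Icc_self
  rw [Set.uIoc_of_le hab.le]
  refine hg.map_set_average_le hgc hs ?_ measure_Ioc_lt_top.ne ?_ ?_ ?_
  · simpa using hab
  · exact (MeasureTheory.ae_restrict_mem measurableSet_Ioc).mono fun t ht => hfs (hsub ht)
  · exact hf.integrableOn_Icc.mono_set hsub
  · exact (hgc.comp hf hfs).integrableOn_Icc.mono_set hsub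

lemma integral_cosh (a b : ℝ) : ∫ t in a..b, cosh t = sinh b - sinh a :=
  integral_eq_sub_of_hasDerivAt (fun t _ => hasDerivAt_sinh t)
    (continuous_cosh.intervalIntegrable a b)

lemma div_arcsin_le_integral_inv_arcsin {c L : ℝ} (hc : 0 < c) (hL : 0 < L)
    (hcL : cosh L * c ≤ √3 / 2) :
    L / arcsin (sinh L * c / L) ≤ ∫ t in 0..L, (arcsin (cosh t * c))⁻¹ := by
  have hmaps : Set.MapsTo (fun t => cosh t * c) (Set.Icc 0 L) (Set.Icc c (√3 / 2)) := by
    intro t ht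
    have hcosh : cosh t ≤ cosh L := cosh_le_cosh.2 (abs_le_abs_of_nonneg ht.1 ht.2)
    exact ⟨le_mul_of_one_le_left hc.le (one_le_cosh t),
      (mul_le_mul_of_nonneg_right hcosh hc.le).trans hcL⟩
  have hsub : Set.Icc c (√3 / 2) ⊆ Set.Ioc 0 (√3 / 2) := fun x hx => ⟨hc.trans_le hx.1, hx.2⟩
  have hcont : ContinuousOn (fun x => (arcsin x)⁻¹) (Set.Icc c (√3 / 2)) :=
    continuous_arcsin.continuousOn.inv₀ fun x hx => (arcsin_pos.2 (hsub hx).1).ne'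
  have hjensen := convexOn_map_interval_average_le
    (convexOn_inv_arcsin.subset hsub (convex_Icc _ _)) hcont isClosed_Icc hL
    (by fun_prop) hmaps
  rw [interval_average_eq_div, interval_average_eq_div, integral_mul_const, integral_cosh,
    sinh_zero, sub_zero, sub_zero, le_div_iff₀ hL] at hjensen
  rwa [div_eq_inv_mul]

lemma sum_range_le_sin {x : ℝ} (h₀ : 0 ≤ x) (h₁ : x ^ 2 ≤ 6) (k : ℕ) :
    ∑ i ∈ Finset.range (2 * k), (-1) ^ i * (x ^ (2 * i + 1) / (2 * i + 1).factorial) ≤ sin x := by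
  refine Antitone.alternating_series_le_tendsto ?_ (antitone_nat_of_succ_le fun i => ?_) k
  · simpa only [mul_div_assoc] using (hasSum_sin x).tendsto_sum_nat
  have hratio : x ^ 2 / ((2 * i + 3) * (2 * i + 2)) ≤ 1 := by
    refine div_le_one_of_le₀ ?_ (by positivity)
    nlinarith [(Nat.cast_nonneg i : (0 : ℝ) ≤ i)]
  calc x ^ (2 * (i + 1) + 1) / (2 * (i + 1) + 1).factorial
      = x ^ (2 * i + 1) / (2 * i + 1).factorial * (x ^ 2 / ((2 * i + 3) * (2 * i + 2))) := by
        rw [show 2 * (i + 1) + 1 = 2 * i + 1 + 1 + 1 by ring, Nat.factorial_succ,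
          Nat.factorial_succ]
        push_cast
        field_simp
        ring
    _ ≤ x ^ (2 * i + 1) / (2 * i + 1).factorial := mul_le_of_le_one_right (by positivity) hratio

lemma sqrt_seventeen_mem_Ioo : √17 ∈ Set.Ioo (4.1231056 : ℝ) 4.1231057 :=
  ⟨by rw [lt_sqrt (by norm_num)]; norm_num, by rw [sqrt_lt' (by norm_num)]; norm_num⟩

lemma ellExt_eq_two_mul_arcosh : ellExt = 2 * arcosh ((5 + √17) / 2) := rfl

lemma cosh_ellExt_div_two : cosh (ellExt / 2) = (5 + √17) / 2 := by
  rw [ellExt_eq_two_mul_arcosh, mul_div_cancel_left₀ _ two_ne_zero]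
  exact cosh_arcosh (by linarith [sqrt_nonneg 17])

lemma sinh_ellExt_div_four_sq : sinh (ellExt / 4) ^ 2 = (3 + √17) / 4 := by
  have h := cosh_two_mul (ellExt / 4)
  rw [show 2 * (ellExt / 4) = ellExt / 2 by ring, cosh_ellExt_div_two, cosh_sq] at h
  linarith

lemma tanh_ellExt_div_four_sq : tanh (ellExt / 4) ^ 2 = (1 + √17) / 8 := by
  rw [tanh_eq_sinh_div_cosh, div_pow, cosh_sq, sinh_ellExt_div_four_sq]
  have h17 : √17 ^ 2 = 17 := sq_sqrt (by norm_num)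
  field_simp
  linear_combination -h17

lemma lt_ellExt_div_twelve : 0.3664286 < ellExt / 12 := by
  have hexp : exp (6 * 0.3664286) < 9.01214 := by
    have hbound := exp_bound' (x := 0.3664286) (by norm_num) (by norm_num) (n := 8) (by norm_num)
    calc exp (6 * 0.3664286) = exp 0.3664286 ^ 6 := mod_cast exp_nat_mul 0.3664286 6
      _ ≤ _ := pow_le_pow_left₀ (exp_pos _).le hbound 6
      _ < 9.01214 := by norm_num [Finset.sum_range_succ, Nat.factorial]
  have hsqrt : 4.45059 ≤ √(((5 + √17) / 2) ^ 2 - 1) := by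
    refine le_sqrt_of_sq_le ?_
    nlinarith [sqrt_seventeen_mem_Ioo.1]
  have harcosh : 6 * 0.3664286 < arcosh ((5 + √17) / 2) := by
    rw [← exp_lt_exp, exp_arcosh (by linarith [sqrt_nonneg 17])]
    linarith [sqrt_seventeen_mem_Ioo.1]
  linarith [ellExt_eq_two_mul_arcosh]

lemma tanh_ellExt_div_four_pos : 0 < tanh (ellExt / 4) := by
  rw [tanh_eq_sinh_div_cosh]
  exact div_pos (sinh_pos_iff.2 (by linarith [lt_ellExt_div_twelve])) (cosh_pos _)

lemma tanh_ellExt_div_four_lt : tanh (ellExt / 4) < 0.8002426 := by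
  refine lt_of_pow_lt_pow_left₀ 2 (by norm_num) ?_
  rw [tanh_ellExt_div_four_sq]
  linarith [sqrt_seventeen_mem_Ioo.2]

lemma sinh_ellExt_div_twelve_lt : sinh (ellExt / 12) < 0.3746842 := by
  have hsinh : sinh (ellExt / 4) < 1.3344575 := by
    refine lt_of_pow_lt_pow_left₀ 2 (by norm_num) ?_
    rw [sinh_ellExt_div_four_sq]
    linarith [sqrt_seventeen_mem_Ioo.2]
  have htriple := sinh_three_mul (ellExt / 12)
  rw [show 3 * (ellExt / 12) = ellExt / 4 by ring] at htriple
  by_contra! hle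
  have hcube : 0.3746842 ^ 3 ≤ sinh (ellExt / 12) ^ 3 := by gcongr
  linarith

lemma cosh_mul_tanh_ellExt_div_four_le {t : ℝ} (ht : t ∈ Set.Icc 0 (ellExt / 12)) :
    cosh t * tanh (ellExt / 4) ≤ √3 / 2 := by
  have hsq : cosh (ellExt / 12) ^ 2 ≤ 1.1404 := by
    rw [cosh_sq]
    have hsinh : sinh (ellExt / 12) ^ 2 ≤ 0.3746842 ^ 2 := by
      have := sinh_nonneg_iff.2 (ht.1.trans ht.2)
      gcongr
      exact sinh_ellExt_div_twelve_lt.le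
    linarith
  have hcosh : cosh t ≤ cosh (ellExt / 12) := cosh_le_cosh.2 (abs_le_abs_of_nonneg ht.1 ht.2)
  refine (le_div_iff₀ two_pos).2 (le_sqrt_of_sq_le ?_)
  calc (cosh t * tanh (ellExt / 4) * 2) ^ 2
      = 4 * cosh t ^ 2 * tanh (ellExt / 4) ^ 2 := by ring
    _ ≤ 4 * cosh (ellExt / 12) ^ 2 * tanh (ellExt / 4) ^ 2 := by gcongr
    _ ≤ 4 * 1.1404 * 0.8002426 ^ 2 := by
      have := tanh_ellExt_div_four_pos
      gcongr
      exact tanh_ellExt_div_four_lt.le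
    _ ≤ 3 := by norm_num

lemma arcsin_sinh_mul_tanh_div_le :
    arcsin (sinh (ellExt / 12) * tanh (ellExt / 4) / (ellExt / 12)) ≤ 0.9584 := by
  have hL := lt_ellExt_div_twelve
  have hpi := pi_gt_three
  refine (arcsin_le_iff_le_sin' ⟨by linarith, by linarith⟩).2 ?_
  calc sinh (ellExt / 12) * tanh (ellExt / 4) / (ellExt / 12)
      ≤ 0.3746842 * 0.8002426 / 0.3664286 := by
        have := tanh_ellExt_div_four_pos
        gcongr
        · exact sinh_ellExt_div_twelve_lt.le
        · exact tanh_ellExt_div_four_lt.le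
    _ ≤ _ := by norm_num [Finset.sum_range_succ, Nat.factorial]
    _ ≤ sin 0.9584 := sum_range_le_sin (by norm_num) (by norm_num) 3

lemma integral_inv_Hcap_sub_Hcap_neg :
    ∫ t in (0 : ℝ)..(ellExt / 12), 1 / (Hcap (collarHalfWidth t) - Hcap (-collarHalfWidth t)) =
      (∫ t in (0 : ℝ)..(ellExt / 12), (arcsin (cosh t * tanh (ellExt / 4)))⁻¹) / 2 := by
  have hL : 0 ≤ ellExt / 12 := by linarith [lt_ellExt_div_twelve]
  rw [← integral_div]
  refine integral_congr fun t ht => ?_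
  rw [Set.uIcc_of_le hL] at ht
  have hpos : 0 < cosh t * tanh (ellExt / 4) := mul_pos (cosh_pos t) tanh_ellExt_div_four_pos
  have hlt := (cosh_mul_tanh_ellExt_div_four_le ht).trans_lt sqrt_three_div_two_lt_one
  rw [Hcap_sub_Hcap_neg_collarHalfWidth ⟨by linarith, hlt⟩, one_div, mul_inv]
  ring

/-- The numerical lower bound for the capacity of the collar of the extremal
hyperbolic Dyck's surface: the half-width `a(t)` is well defined on
`[0, ℓ/12]`, and Muetzel's integral bound is at least `2.294`. -/
theorem hyperbolic_collar_capacity_lower_bound_numeric :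
    (∀ t ∈ Set.Icc (0:ℝ) (ellExt / 12),
        Real.cosh t * Real.tanh (ellExt / 4) < 1) ∧
      12 * ∫ t in (0:ℝ)..(ellExt / 12),
          1 / (Hcap (collarHalfWidth t) - Hcap (-(collarHalfWidth t))) ≥ 2.294 := by
  have hL := lt_ellExt_div_twelve
  have hL₀ : 0 < ellExt / 12 := by linarith
  have hT := tanh_ellExt_div_four_pos
  refine ⟨fun t ht => (cosh_mul_tanh_ellExt_div_four_le ht).trans_lt sqrt_three_div_two_lt_one, ?_⟩
  have hmean : 0 < arcsin (sinh (ellExt / 12) * tanh (ellExt / 4) / (ellExt / 12)) :=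
    arcsin_pos.2 (div_pos (mul_pos (sinh_pos_iff.2 hL₀) hT) hL₀)
  have hjensen := div_arcsin_le_integral_inv_arcsin hT hL₀
    (cosh_mul_tanh_ellExt_div_four_le ⟨hL₀.le, le_rfl⟩)
  rw [integral_inv_Hcap_sub_Hcap_neg, ge_iff_le]
  calc (2.294 : ℝ)
      ≤ 6 * (0.3664286 / 0.9584) := by norm_num
    _ ≤ 6 * ((ellExt / 12) /
          arcsin (sinh (ellExt / 12) * tanh (ellExt / 4) / (ellExt / 12))) := by
      gcongr
      exact arcsin_sinh_mul_tanh_div_le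
    _ ≤ 6 * ∫ t in (0:ℝ)..(ellExt / 12), (arcsin (cosh t * tanh (ellExt / 4)))⁻¹ := by gcongr
    _ = _ := by ring
end
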